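/- arXiv:2506.23877 — 2 statements merged into one kernel-verified Lean document; each statement's English description precedes it below -/
import Mathlib

section
/- Let (G=(V,E),(J_v),(O_v),(T_{vu})) be a simple GIFS with G strongly connected, satisfying the bounded distortion condition (G.7)_B and the contractibility condition (G.9)_J. Then dim_H K ≤ s̄ := inf{s ≥ 0 : P(sφ) ≤ 0}, where dim_H denotes Hausdorff dimension. -/
/-!
Let `s ≥ 0` have `P(sφ) ≤ 0` and let `t > s`. The limit set is covered by the coded images of the
cylinders of length `n`, and it suffices to bound `∑_w diam (π [w]) ^ t` along `n → ∞`.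

Cylinder estimate (`exists_dist_coding_le`): `diam (π [w]) ≤ C * exp (S_n φ ω')` for some
`ω' ∈ [w]`, with `C` independent of `w`. The image `π [w]` lies in the image of the last seed set `J`
under a composition of `n - 1` maps. The sets `J` are connected but not convex, so the mean value
inequality is only available on balls of a fixed radius `δ`; a uniformly bounded number of them
covers each `J`, and connectedness turns local bounds into global ones
(`dist_le_card_mul_of_connected`). Together with `(G.7)_B` this gives bounded distortion of the
product of the derivative norms along compositions of any length (`exists_distortion`). The
remaining `n`-th factor of `exp (S_n φ)` comes from `diam J`, by `(G.9)_J`; strong connectivity is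
used to extend the word by the edge which nearly realizes the supremum there.

Pressure estimate (`eventually_pressureZ_le_one`): `Z_n(tφ) ≤ ρ ^ ((t - s) n) * Z_n(sφ)` where
`ρ < 1` bounds the contraction rates, and `Z_n(sφ)` grows subexponentially. Hence `Z_n(tφ) ≤ 1` for
large `n`, the `t`-dimensional Hausdorff measure of the limit set is finite, and its dimension is at
most `t`.
-/

open scoped ENNReal NNReal Topology
open Filter Set Metric

noncomputable section

/-- The shift transformation on one-sided sequences. -/
def shift {S : Type*} (ω : ℕ → S) : ℕ → S := fun n => ω (n + 1)

/-- The topological Markov shift with transition `A`. -/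
def TMS {S : Type*} (A : S → S → Prop) : Set (ℕ → S) := {ω | ∀ n, A (ω n) (ω (n + 1))}

/-- The cylinder set of a word `w` inside the TMS with transition `A`. -/
def cylSet {S : Type*} (A : S → S → Prop) (n : ℕ) (w : Fin n → S) : Set (ℕ → S) :=
  {ω | ω ∈ TMS A ∧ ∀ i : Fin n, ω i = w i}

/-- Birkhoff sum `S_n f`. -/
def birkhoff {S : Type*} (f : (ℕ → S) → ℝ) (n : ℕ) (ω : ℕ → S) : ℝ :=
  ∑ i ∈ Finset.range n, f (shift^[i] ω)

/-- Partition function `Z_n(f) = Σ_w sup_{ω ∈ [w]} exp (S_n f ω)`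
(the supremum of `exp` coincides with `exp` of the supremum; empty cylinders contribute `0`). -/
def pressureZ {S : Type*} (A : S → S → Prop) (f : (ℕ → S) → ℝ) (n : ℕ) : ℝ≥0∞ :=
  ∑' w : Fin n → S, ⨆ ω ∈ cylSet A n w, ENNReal.ofReal (Real.exp (birkhoff f n ω))

/-- Logarithm `ℝ≥0∞ → EReal`, with `log 0 = ⊥` and `log ⊤ = ⊤`. -/
def elog (x : ℝ≥0∞) : EReal :=
  if x = 0 then ⊥ else if x = ⊤ then ⊤ else ((Real.log x.toReal : ℝ) : EReal)

/-- The topological pressure `P(f) = lim (1/n) log Z_n(f)` (as a limsup, which equals the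
limit whenever the limit exists). -/
def pressure {S : Type*} (A : S → S → Prop) (f : (ℕ → S) → ℝ) : EReal :=
  Filter.limsup (fun n : ℕ => ((n : ℝ)⁻¹ : EReal) * elog (pressureZ A f n)) Filter.atTop

/-- A potential is summable if `Σ_s exp (sup_{[s]} f) < ∞`. -/
def SummablePot {S : Type*} (A : S → S → Prop) (f : (ℕ → S) → ℝ) : Prop :=
  pressureZ A f 1 ≠ ⊤

/-- There is an `A`-admissible word of length `≥ 2` from `a` to `b`. -/
def Chain {S : Type*} (A : S → S → Prop) (a b : S) : Prop :=
  ∃ (m : ℕ) (w : ℕ → S), 1 ≤ m ∧ w 0 = a ∧ w m = b ∧ ∀ i < m, A (w i) (w (i + 1))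

/-- Restriction of a transition matrix to a set of states. -/
def restrictT {S : Type*} (A : S → S → Prop) (C : Set S) : S → S → Prop :=
  fun i j => A i j ∧ i ∈ C ∧ j ∈ C

/-- The communication class (the class of `a` under `↔`). -/
def commClass {S : Type*} (A : S → S → Prop) (a : S) : Set S :=
  {b | a = b ∨ (Chain A a b ∧ Chain A b a)}

end
noncomputable section

/-- The ambient Euclidean space `ℝ^D`. -/
abbrev Pt (D : ℕ) := EuclideanSpace ℝ (Fin D)

/-- `‖A‖_i = ‖A⁻¹‖⁻¹` for an invertible continuous linear map (junk value otherwise). -/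
def inorm {D : ℕ} (A : Pt D →L[ℝ] Pt D) : ℝ := ‖Ring.inverse A‖⁻¹

/-- A simple graph-directed iterated function system (GIFS) in `ℝ^D` on the vertex set `V`,
with edge relation `E`, seed sets `J`, open sets `O` and contractions `T`. -/
structure SGIFS (D : ℕ) (V : Type*) where
  E : V → V → Prop
  J : V → Set (Pt D)
  O : V → Set (Pt D)
  T : V → V → Pt D → Pt D
  r : ℝ
  hr : r < 1
  J_cpt : ∀ v, IsCompact (J v)
  J_conn : ∀ v, IsConnected (J v)
  J_reg : ∀ v, J v = closure (interior (J v))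
  J_diam : ∃ c : ℝ, ∀ v, Metric.diam (J v) ≤ c
  O_open : ∀ v, IsOpen (O v)
  O_bdd : ∀ v, Bornology.IsBounded (O v)
  O_conn : ∀ v, IsConnected (O v)
  hJO : ∃ c > 0, ∀ v, ∀ x ∈ J v, ∀ y ∉ O v, c ≤ dist x y
  T_diff : ∀ ⦃v u⦄, E v u → ContDiffOn ℝ 1 (T v u) (O u)
  T_inj : ∀ ⦃v u⦄, E v u → Set.InjOn (T v u) (O u)
  T_openim : ∀ ⦃v u⦄, E v u → IsOpen (T v u '' O u)
  T_sub : ∀ ⦃v u⦄, E v u → T v u '' O u ⊆ O v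
  T_J : ∀ ⦃v u⦄, E v u → T v u '' J u ⊆ J v
  T_unit : ∀ ⦃v u⦄, E v u → ∀ x ∈ O u, IsUnit (fderiv ℝ (T v u) x)
  T_contr : ∀ ⦃v u⦄, E v u → ∀ x ∈ O u, ‖fderiv ℝ (T v u) x‖ ≤ r

/-- Composition `T_{ω₀ω₁} ∘ ⋯ ∘ T_{ω_{k-1}ω_k}` along a sequence (identity for `k = 0`). -/
def vcomp {D : ℕ} {V : Type*} (T : V → V → Pt D → Pt D) (ω : ℕ → V) : ℕ → Pt D → Pt D
  | 0 => id
  | k + 1 => vcomp T ω k ∘ T (ω k) (ω (k + 1))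

/-- `π` is the coding map of the simple system `(Ed, J, T)`:
`{π ω} = ⋂_{k ≥ 1} T_{ω₀ω₁} ∘ ⋯ ∘ T_{ω_{k-1}ω_k} (J_{ω_k})`. -/
def IsCodingMap {D : ℕ} {V : Type*} (Ed : V → V → Prop) (J : V → Set (Pt D))
    (T : V → V → Pt D → Pt D) (π : (ℕ → V) → Pt D) : Prop :=
  ∀ ω ∈ {ω : ℕ → V | ∀ n, Ed (ω n) (ω (n + 1))},
    (⋂ k : ℕ, vcomp T ω (k + 1) '' J (ω (k + 1))) = {π ω}

/-- `pcomp T w j m = T_{w_j w_{j+1}} ∘ ⋯ ∘ T_{w_{j+m-1} w_{j+m}}` (identity for `m = 0`). -/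
def pcomp {D : ℕ} {V : Type*} (T : V → V → Pt D → Pt D) (w : ℕ → V) : ℕ → ℕ → Pt D → Pt D
  | _, 0 => id
  | j, m + 1 => T (w j) (w (j + 1)) ∘ pcomp T w (j + 1) m

/-- The potential `φ(ω) = log ‖T'_{ω₀ω₁}(π(σω))‖`. -/
def phiU {D : ℕ} {V : Type*} (T : V → V → Pt D → Pt D) (π : (ℕ → V) → Pt D)
    (ω : ℕ → V) : ℝ :=
  Real.log ‖fderiv ℝ (T (ω 0) (ω 1)) (π (fun n => ω (n + 1)))‖

/-- The potential `φ̲(ω) = log ‖T'_{ω₀ω₁}(π(σω))‖_i`. -/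
def phiL {D : ℕ} {V : Type*} (T : V → V → Pt D → Pt D) (π : (ℕ → V) → Pt D)
    (ω : ℕ → V) : ℝ :=
  Real.log (inorm (fderiv ℝ (T (ω 0) (ω 1)) (π (fun n => ω (n + 1)))))

/-- Conformality condition `(G.5)_C`. -/
def CondConf {D : ℕ} {V : Type*} (Ed : V → V → Prop) (O : V → Set (Pt D))
    (T : V → V → Pt D → Pt D) : Prop :=
  ∀ ⦃v u⦄, Ed v u → ∀ x ∈ O u, IsConformalMap (fderiv ℝ (T v u) x)

/-- Strong separation condition `(G.6)_S` relative to a limit set `K`. -/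
def CondSSC {D : ℕ} {V : Type*} (Ed : V → V → Prop) (J : V → Set (Pt D))
    (T : V → V → Pt D → Pt D) (K : Set (Pt D)) : Prop :=
  ∀ ⦃v u v' u'⦄, Ed v u → Ed v' u' → (v, u) ≠ (v', u') →
    (T v u '' (J u ∩ K)) ∩ (T v' u' '' (J u' ∩ K)) = ∅

/-- Open set condition `(G.6)_O`. -/
def CondOSC {D : ℕ} {V : Type*} (Ed : V → V → Prop) (J : V → Set (Pt D))
    (T : V → V → Pt D → Pt D) : Prop :=
  ∀ ⦃v u v' u'⦄, Ed v u → Ed v' u' → (v, u) ≠ (v', u') →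
    (T v u '' interior (J u)) ∩ (T v' u' '' interior (J u')) = ∅

/-- Bounded distortion `(G.7)_B`. -/
def CondBD {D : ℕ} {V : Type*} (Ed : V → V → Prop) (O : V → Set (Pt D))
    (T : V → V → Pt D → Pt D) : Prop :=
  ∃ c > 0, ∃ β ∈ Set.Ioc (0 : ℝ) 1, ∀ ⦃v u⦄, Ed v u → ∀ x ∈ O u, ∀ y ∈ O u,
    |‖fderiv ℝ (T v u) x‖ - ‖fderiv ℝ (T v u) y‖| ≤
      c * ‖fderiv ℝ (T v u) x‖ * dist x y ^ β

/-- Bounded distortion for inverse maps `(G.7)_{BI}`. -/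
def CondBDI {D : ℕ} {V : Type*} (Ed : V → V → Prop) (O : V → Set (Pt D))
    (T : V → V → Pt D → Pt D) : Prop :=
  ∃ c > 0, ∃ β ∈ Set.Ioc (0 : ℝ) 1, ∀ ⦃v u⦄, Ed v u → ∀ x ∈ O u, ∀ y ∈ O u,
    |inorm (fderiv ℝ (T v u) x) - inorm (fderiv ℝ (T v u) y)| ≤
      c * inorm (fderiv ℝ (T v u) x) * dist x y ^ β

/-- Contractibility of the seed sets `(G.9)_J`. -/
def CondG9 {D : ℕ} {V : Type*} (Ed : V → V → Prop) (J : V → Set (Pt D))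
    (T : V → V → Pt D → Pt D) : Prop :=
  ∃ c > 0, ∀ v, Metric.diam (J v) ≤
    c * sSup {t : ℝ | ∃ u, Ed v u ∧ ∃ z ∈ J u, t = ‖fderiv ℝ (T v u) z‖}

/-- The summability interval `Ī^V` relative to the limit set `K`. -/
def IbarSet {D : ℕ} {V : Type*} (Ed : V → V → Prop) (J : V → Set (Pt D))
    (T : V → V → Pt D → Pt D) (K : Set (Pt D)) : Set ℝ :=
  {s | 0 ≤ s ∧
    (∑' v : V, ⨆ (u : V) (_ : Ed v u) (x : Pt D) (_ : x ∈ K ∩ J u),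
      ENNReal.ofReal (inorm (fderiv ℝ (T v u) x) ^ s)) ≠ ⊤}

end

noncomputable section

/-- Summability condition `(G.8)_{SV}`: some `s ∈ Ī^V` satisfies `P(s φ̲) = 0`. -/
def CondG8 {D : ℕ} {V : Type*} (Ed : V → V → Prop) (J : V → Set (Pt D))
    (T : V → V → Pt D → Pt D) (π : (ℕ → V) → Pt D) : Prop :=
  ∃ s ∈ IbarSet Ed J T (π '' TMS Ed), pressure Ed (fun ω => s * phiL T π ω) = 0

/-- A set of vertices is strongly connected (with edges restricted to it). -/
def SCOn {V : Type*} (Ed : V → V → Prop) (C : Set V) : Prop :=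
  ∀ v ∈ C, ∀ u ∈ C, Chain (restrictT Ed C) v u

/-- A strongly connected component: a maximal strongly connected set of vertices. -/
def IsSCC {V : Type*} (Ed : V → V → Prop) (C : Set V) : Prop :=
  SCOn Ed C ∧ ∀ C', C ⊆ C' → SCOn Ed C' → C' = C

end

section Aux

/-! ### Connected sets covered by small balls -/

/-- A connected set `J` covered by `#F` balls of diameter `δ` is mapped to a set of diameter at most
`#F * A` by every continuous map which moves `δ`-close points at most `A` apart: the function
`p ↦ dist (g x) (g p)` takes all values in `[0, dist (g x) (g y)]`, and the part coming from one
ball has length at most `A`. -/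
lemma dist_le_card_mul_of_connected {D : ℕ} {J : Set (Pt D)} (hJ : IsPreconnected J)
    {g : Pt D → Pt D} (hg : ContinuousOn g J) (F : Finset (Pt D)) (x₀ : Pt D) {δ A : ℝ}
    (hA : 0 ≤ A) (hcov : J ⊆ ⋃ f ∈ F, ball (x₀ + f) (δ / 2))
    (h : ∀ x ∈ J, ∀ y ∈ J, dist x y < δ → dist (g x) (g y) ≤ A)
    {x y : Pt D} (hx : x ∈ J) (hy : y ∈ J) : dist (g x) (g y) ≤ F.card * A := by
  set q : Pt D → ℝ := fun p => dist (g x) (g p) with hq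
  have hqc : ContinuousOn q J := (continuous_const.dist continuous_id).comp_continuousOn hg
  have hsub : Icc 0 (dist (g x) (g y)) ⊆ ⋃ f ∈ F, q '' (J ∩ ball (x₀ + f) (δ / 2)) := by
    have h1 : Icc 0 (dist (g x) (g y)) ⊆ q '' J :=
      (hJ.image q hqc).Icc_subset ⟨x, hx, by simp [hq]⟩ ⟨y, hy, rfl⟩
    refine h1.trans ?_
    rintro _ ⟨p, hp, rfl⟩
    have h2 := hcov hp
    simp only [mem_iUnion] at h2 ⊢
    obtain ⟨f, hf, hpf⟩ := h2
    exact ⟨f, hf, p, ⟨hp, hpf⟩, rfl⟩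
  have hpiece : ∀ f ∈ F, MeasureTheory.volume (q '' (J ∩ ball (x₀ + f) (δ / 2))) ≤
      ENNReal.ofReal A := by
    intro f _
    refine (Real.volume_le_diam _).trans (Metric.ediam_le ?_)
    rintro _ ⟨p, ⟨hp, hpb⟩, rfl⟩ _ ⟨p', ⟨hp', hpb'⟩, rfl⟩
    rw [edist_dist]
    apply ENNReal.ofReal_le_ofReal
    have hd : dist p p' < δ := by
      have := dist_triangle_right p p' (x₀ + f)
      rw [mem_ball] at hpb hpb'
      linarith
    refine le_trans ?_ (h p hp p' hp' hd)
    rw [Real.dist_eq]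
    simpa [hq, dist_comm] using abs_dist_sub_le (g p) (g p') (g x)
  have hvol : ENNReal.ofReal (dist (g x) (g y)) ≤ ENNReal.ofReal (F.card * A) := by
    calc ENNReal.ofReal (dist (g x) (g y))
        = MeasureTheory.volume (Icc 0 (dist (g x) (g y))) := by simp [Real.volume_Icc]
      _ ≤ MeasureTheory.volume (⋃ f ∈ F, q '' (J ∩ ball (x₀ + f) (δ / 2))) :=
          MeasureTheory.measure_mono hsub
      _ ≤ ∑ f ∈ F, MeasureTheory.volume (q '' (J ∩ ball (x₀ + f) (δ / 2))) :=
          MeasureTheory.measure_biUnion_finset_le _ _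
      _ ≤ ∑ _f ∈ F, ENNReal.ofReal A := Finset.sum_le_sum hpiece
      _ = ENNReal.ofReal (F.card * A) := by
          rw [Finset.sum_const, nsmul_eq_mul, ENNReal.ofReal_mul (by positivity)]
          simp
  exact (ENNReal.ofReal_le_ofReal_iff (by positivity)).1 hvol

/-! ### Compositions along admissible sequences and the coding map -/

/-- The product of the derivative norms met along the composition `pcomp T w j m`, evaluated at the
orbit of `z`; an upper bound for the norm of the derivative of `pcomp T w j m` at `z`. -/
noncomputable def dprod {D : ℕ} {V : Type*} (T : V → V → Pt D → Pt D) (w : ℕ → V) :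
    ℕ → ℕ → Pt D → ℝ
  | _, 0, _ => 1
  | j, m + 1, z =>
      ‖fderiv ℝ (T (w j) (w (j + 1))) (pcomp T w (j + 1) m z)‖ * dprod T w (j + 1) m z

lemma shift_iterate_apply {S : Type*} (ω : ℕ → S) (i n : ℕ) : shift^[i] ω n = ω (i + n) := by
  induction i generalizing n with
  | zero => simp
  | succ i ih =>
    rw [Function.iterate_succ_apply', shift, ih]
    congr 1
    omega

lemma shift_mem_TMS {S : Type*} {A : S → S → Prop} {ω : ℕ → S} (h : ω ∈ TMS A) :
    shift ω ∈ TMS A := fun n => h (n + 1)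

lemma shift_iterate_mem_TMS {S : Type*} {A : S → S → Prop} {ω : ℕ → S} (h : ω ∈ TMS A) (i : ℕ) :
    shift^[i] ω ∈ TMS A := by
  induction i with
  | zero => simpa
  | succ i ih =>
    rw [Function.iterate_succ_apply']
    exact shift_mem_TMS ih

variable {D : ℕ} {V : Type*}

lemma dprod_nonneg (T : V → V → Pt D → Pt D) (w : ℕ → V) (j m : ℕ) (z : Pt D) :
    0 ≤ dprod T w j m z := by
  induction m generalizing j with
  | zero => simp [dprod]
  | succ m ih => exact mul_nonneg (norm_nonneg _) (ih _)

lemma pcomp_congr (T : V → V → Pt D → Pt D) {w w' : ℕ → V} (j m : ℕ)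
    (h : ∀ i ≤ m, w (j + i) = w' (j + i)) : pcomp T w j m = pcomp T w' j m := by
  induction m generalizing j with
  | zero => rfl
  | succ m ih =>
    have h0 := h 0 (by omega)
    have h1 := h 1 (by omega)
    simp only [add_zero] at h0
    simp only [pcomp, h0, h1]
    rw [ih (j + 1) (fun i hi => by
      have := h (i + 1) (by omega)
      rwa [show j + 1 + i = j + (i + 1) by omega])]

lemma dprod_congr (T : V → V → Pt D → Pt D) {w w' : ℕ → V} (j m : ℕ)
    (h : ∀ i ≤ m, w (j + i) = w' (j + i)) : dprod T w j m = dprod T w' j m := by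
  induction m generalizing j with
  | zero => rfl
  | succ m ih =>
    have h0 := h 0 (by omega)
    have h1 := h 1 (by omega)
    have h' : ∀ i ≤ m, w (j + 1 + i) = w' (j + 1 + i) := fun i hi => by
      have := h (i + 1) (by omega)
      rwa [show j + 1 + i = j + (i + 1) by omega]
    simp only [add_zero] at h0
    funext z
    simp only [dprod, h0, h1]
    rw [ih (j + 1) h', pcomp_congr T (j + 1) m h']

lemma pcomp_mapsTo_J (G : SGIFS D V) {ω : ℕ → V} (hω : ω ∈ TMS G.E) (j m : ℕ) {z : Pt D}
    (hz : z ∈ G.J (ω (j + m))) : pcomp G.T ω j m z ∈ G.J (ω j) := by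
  induction m generalizing j with
  | zero => simpa [pcomp] using hz
  | succ m ih =>
    exact G.T_J (hω j) ⟨_, ih (j + 1) (by rwa [show j + 1 + m = j + (m + 1) by omega]), rfl⟩

lemma pcomp_mapsTo_O (G : SGIFS D V) {ω : ℕ → V} (hω : ω ∈ TMS G.E) (j m : ℕ) {z : Pt D}
    (hz : z ∈ G.O (ω (j + m))) : pcomp G.T ω j m z ∈ G.O (ω j) := by
  induction m generalizing j with
  | zero => simpa [pcomp] using hz
  | succ m ih =>
    exact G.T_sub (hω j) ⟨_, ih (j + 1) (by rwa [show j + 1 + m = j + (m + 1) by omega]), rfl⟩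

lemma T_differentiableAt (G : SGIFS D V) {v u : V} (h : G.E v u) {z : Pt D} (hz : z ∈ G.O u) :
    DifferentiableAt ℝ (G.T v u) z :=
  ((G.T_diff h).differentiableOn one_ne_zero).differentiableAt ((G.O_open u).mem_nhds hz)

lemma pcomp_differentiableAt (G : SGIFS D V) {ω : ℕ → V} (hω : ω ∈ TMS G.E) (j m : ℕ) {z : Pt D}
    (hz : z ∈ G.O (ω (j + m))) :
    DifferentiableAt ℝ (pcomp G.T ω j m) z ∧
      ‖fderiv ℝ (pcomp G.T ω j m) z‖ ≤ dprod G.T ω j m z := by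
  induction m generalizing j with
  | zero =>
    simp only [pcomp, dprod]
    exact ⟨differentiableAt_id, by
      rw [fderiv_id]
      exact ContinuousLinearMap.norm_id_le⟩
  | succ m ih =>
    have hz' : z ∈ G.O (ω (j + 1 + m)) := by rwa [show j + 1 + m = j + (m + 1) by omega]
    obtain ⟨h1, h2⟩ := ih (j + 1) hz'
    have h3 := T_differentiableAt G (hω j) (pcomp_mapsTo_O G hω (j + 1) m hz')
    simp only [pcomp, dprod]
    refine ⟨h3.comp z h1, ?_⟩
    rw [fderiv_comp z h3 h1]
    exact (ContinuousLinearMap.opNorm_comp_le _ _).trans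
      (mul_le_mul_of_nonneg_left h2 (norm_nonneg _))

lemma dprod_le_pow (G : SGIFS D V) {ω : ℕ → V} (hω : ω ∈ TMS G.E) {ρ : ℝ} (hρ0 : 0 ≤ ρ)
    (hρ : G.r ≤ ρ) (j m : ℕ) {z : Pt D} (hz : z ∈ G.O (ω (j + m))) :
    dprod G.T ω j m z ≤ ρ ^ m := by
  induction m generalizing j with
  | zero => simp [dprod]
  | succ m ih =>
    have hz' : z ∈ G.O (ω (j + 1 + m)) := by rwa [show j + 1 + m = j + (m + 1) by omega]
    rw [pow_succ']
    exact mul_le_mul ((G.T_contr (hω j) _ (pcomp_mapsTo_O G hω (j + 1) m hz')).trans hρ)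
      (ih _ hz') (dprod_nonneg _ _ _ _ _) hρ0

lemma vcomp_eq_comp (T : V → V → Pt D → Pt D) (ω : ℕ → V) (k : ℕ) :
    vcomp T ω (k + 1) = T (ω 0) (ω 1) ∘ vcomp T (shift ω) k := by
  induction k with
  | zero => rfl
  | succ k ih =>
    rw [vcomp, ih]
    rfl

lemma vcomp_mapsTo_J (G : SGIFS D V) {ω : ℕ → V} (hω : ω ∈ TMS G.E) (k : ℕ) {z : Pt D}
    (hz : z ∈ G.J (ω k)) : vcomp G.T ω k z ∈ G.J (ω 0) := by
  induction k generalizing z with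
  | zero => simpa [vcomp] using hz
  | succ k ih => exact ih (G.T_J (hω k) ⟨z, hz, rfl⟩)

lemma coding_mem_J (G : SGIFS D V) {π : (ℕ → V) → Pt D} (hπ : IsCodingMap G.E G.J G.T π)
    {ω : ℕ → V} (hω : ω ∈ TMS G.E) : π ω ∈ G.J (ω 0) := by
  have h : π ω ∈ ⋂ k : ℕ, vcomp G.T ω (k + 1) '' G.J (ω (k + 1)) := by
    rw [hπ ω hω]; rfl
  obtain ⟨z, hz, hzω⟩ := mem_iInter.1 h 0
  rw [← hzω]
  exact vcomp_mapsTo_J G hω 1 hz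

lemma coding_eq_T (G : SGIFS D V) {π : (ℕ → V) → Pt D} (hπ : IsCodingMap G.E G.J G.T π)
    {ω : ℕ → V} (hω : ω ∈ TMS G.E) : G.T (ω 0) (ω 1) (π (shift ω)) = π ω := by
  have h : π (shift ω) ∈ ⋂ k : ℕ, vcomp G.T (shift ω) (k + 1) '' G.J (shift ω (k + 1)) := by
    rw [hπ _ (shift_mem_TMS hω)]; rfl
  have h' : G.T (ω 0) (ω 1) (π (shift ω)) ∈
      ⋂ k : ℕ, vcomp G.T ω (k + 1) '' G.J (ω (k + 1)) := by
    refine mem_iInter.2 fun k => ?_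
    cases k with
    | zero => exact ⟨π (shift ω), coding_mem_J G hπ (shift_mem_TMS hω), rfl⟩
    | succ k =>
      obtain ⟨z, hz, hzω⟩ := mem_iInter.1 h k
      refine ⟨z, hz, ?_⟩
      rw [vcomp_eq_comp, Function.comp_apply, hzω]
  rw [hπ ω hω] at h'
  exact h'

lemma pcomp_coding (G : SGIFS D V) {π : (ℕ → V) → Pt D} (hπ : IsCodingMap G.E G.J G.T π)
    {ω : ℕ → V} (hω : ω ∈ TMS G.E) (j m : ℕ) :
    pcomp G.T ω j m (π (shift^[j + m] ω)) = π (shift^[j] ω) := by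
  induction m generalizing j with
  | zero => rfl
  | succ m ih =>
    have h := coding_eq_T G hπ (shift_iterate_mem_TMS hω j)
    simp only [shift_iterate_apply, ← Function.iterate_succ_apply' shift] at h
    simp only [pcomp, Function.comp_apply]
    rw [show j + (m + 1) = j + 1 + m by omega, ih]
    exact h

lemma J_subset_O (G : SGIFS D V) (v : V) : G.J v ⊆ G.O v := by
  intro x hx
  obtain ⟨c, hc, h⟩ := G.hJO
  by_contra hxO
  have := h v x hx x hxO
  simp at this
  linarith

lemma coding_shift_mem_J (G : SGIFS D V) {π : (ℕ → V) → Pt D} (hπ : IsCodingMap G.E G.J G.T π)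
    {ω : ℕ → V} (hω : ω ∈ TMS G.E) (j : ℕ) : π (shift^[j] ω) ∈ G.J (ω j) := by
  simpa [shift_iterate_apply] using coding_mem_J G hπ (shift_iterate_mem_TMS hω j)

lemma fderiv_pos [Nontrivial (Pt D)] (G : SGIFS D V) {v u : V} (h : G.E v u) {z : Pt D}
    (hz : z ∈ G.O u) : 0 < ‖fderiv ℝ (G.T v u) z‖ :=
  norm_pos_iff.2 (G.T_unit h z hz).ne_zero

lemma exp_phiU [Nontrivial (Pt D)] (G : SGIFS D V) {π : (ℕ → V) → Pt D}
    (hπ : IsCodingMap G.E G.J G.T π) {ω : ℕ → V} (hω : ω ∈ TMS G.E) (j : ℕ) :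
    Real.exp (phiU G.T π (shift^[j] ω)) =
      ‖fderiv ℝ (G.T (ω j) (ω (j + 1))) (π (shift^[j + 1] ω))‖ := by
  have h : phiU G.T π (shift^[j] ω) =
      Real.log ‖fderiv ℝ (G.T (ω j) (ω (j + 1))) (π (shift^[j + 1] ω))‖ := by
    rw [Function.iterate_succ_apply']
    change Real.log ‖fderiv ℝ (G.T (shift^[j] ω 0) (shift^[j] ω 1)) _‖ = _
    rw [shift_iterate_apply, shift_iterate_apply, add_zero]
    rfl
  rw [h, Real.exp_log]
  exact fderiv_pos G (hω j) (J_subset_O G _ (coding_shift_mem_J G hπ hω (j + 1)))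

lemma exp_birkhoff_eq_dprod [Nontrivial (Pt D)] (G : SGIFS D V) {π : (ℕ → V) → Pt D}
    (hπ : IsCodingMap G.E G.J G.T π) {ω : ℕ → V} (hω : ω ∈ TMS G.E) (j m : ℕ) :
    Real.exp (birkhoff (phiU G.T π) m (shift^[j] ω)) =
      dprod G.T ω j m (π (shift^[j + m] ω)) := by
  induction m generalizing j with
  | zero => simp [birkhoff, dprod]
  | succ m ih =>
    have h := ih (j + 1)
    rw [birkhoff, Finset.sum_range_succ', Real.exp_add, dprod,
      show j + (m + 1) = j + 1 + m by omega, pcomp_coding G hπ hω (j + 1) m, ← h,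
      Function.iterate_zero, id, exp_phiU G hπ hω j, mul_comm]
    congr 2
    rw [birkhoff]
    refine Finset.sum_congr rfl fun i _ => ?_
    rw [← Function.iterate_add_apply, ← Function.iterate_add_apply]
    congr 2
    omega

/-! ### Bounded distortion -/

lemma exists_ball_subset_O (G : SGIFS D V) :
    ∃ δ > 0, ∀ v, ∀ x ∈ G.J v, ball x δ ⊆ G.O v := by
  obtain ⟨δ, hδ, h⟩ := G.hJO
  refine ⟨δ, hδ, fun v x hx y hy => ?_⟩
  by_contra hyO
  have := h v x hx y hyO
  rw [mem_ball, dist_comm] at hy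
  linarith

/-- The sets `J v` have uniformly bounded diameter, so up to translation one and the same finite
family of small balls covers all of them. -/
lemma exists_uniform_cover (G : SGIFS D V) {δ : ℝ} (hδ : 0 < δ) :
    ∃ F : Finset (Pt D), ∀ v, ∀ x₀ ∈ G.J v, G.J v ⊆ ⋃ f ∈ F, ball (x₀ + f) (δ / 2) := by
  obtain ⟨c, hc⟩ := G.J_diam
  obtain ⟨t, -, htf, ht⟩ := finite_cover_balls_of_compact
    (isCompact_closedBall (0 : Pt D) c) (half_pos hδ)
  refine ⟨htf.toFinset, fun v x₀ hx₀ x hx => ?_⟩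
  have h1 : x - x₀ ∈ closedBall (0 : Pt D) c := by
    rw [mem_closedBall_zero_iff, ← dist_eq_norm]
    exact (dist_le_diam_of_mem (G.J_cpt v).isBounded hx hx₀).trans (hc v)
  have h2 := ht h1
  simp only [mem_iUnion] at h2 ⊢
  obtain ⟨f, hf, hxf⟩ := h2
  refine ⟨f, htf.mem_toFinset.2 hf, ?_⟩
  rw [mem_ball, dist_eq_norm] at hxf ⊢
  rwa [show x - (x₀ + f) = x - x₀ - f by abel]

lemma dist_pcomp_le_of_ball (G : SGIFS D V) {δ : ℝ} (hδ : ∀ v, ∀ x ∈ G.J v, ball x δ ⊆ G.O v)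
    {ω : ℕ → V} (hω : ω ∈ TMS G.E) (j m : ℕ) {x z : Pt D} (hx : x ∈ G.J (ω (j + m)))
    (hz : z ∈ ball x δ) {L : ℝ} (hL : ∀ y ∈ ball x δ, dprod G.T ω j m y ≤ L) :
    dist (pcomp G.T ω j m z) (pcomp G.T ω j m x) ≤ L * dist z x := by
  have hd : ∀ y ∈ ball x δ, DifferentiableAt ℝ (pcomp G.T ω j m) y ∧
      ‖fderiv ℝ (pcomp G.T ω j m) y‖ ≤ dprod G.T ω j m y :=
    fun y hy => pcomp_differentiableAt G hω j m (hδ _ x hx hy)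
  rw [dist_eq_norm, dist_eq_norm]
  exact (convex_ball x δ).norm_image_sub_le_of_norm_fderiv_le (fun y hy => (hd y hy).1)
    (fun y hy => (hd y hy).2.trans (hL y hy))
    (mem_ball_self (dist_nonneg.trans_lt (mem_ball.1 hz))) hz

/-- A bound `L` for the derivative of `pcomp` on the `δ`-neighbourhood of the (not necessarily
convex) set `J` controls the distance of images of arbitrary points of `J`. -/
lemma dist_pcomp_le_of_J (G : SGIFS D V) {δ : ℝ} (hδ : ∀ v, ∀ x ∈ G.J v, ball x δ ⊆ G.O v)
    {F : Finset (Pt D)} (hF : ∀ v, ∀ x₀ ∈ G.J v, G.J v ⊆ ⋃ f ∈ F, ball (x₀ + f) (δ / 2))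
    {ω : ℕ → V} (hω : ω ∈ TMS G.E) (j m : ℕ) {L B : ℝ} (hL0 : 0 ≤ L) (hB : 0 ≤ B)
    (hL : ∀ x ∈ G.J (ω (j + m)), ∀ y ∈ ball x δ, dprod G.T ω j m y ≤ L)
    (hdist : ∀ x ∈ G.J (ω (j + m)), ∀ y ∈ G.J (ω (j + m)), dist x y < δ → dist x y ≤ B)
    {x y : Pt D} (hx : x ∈ G.J (ω (j + m))) (hy : y ∈ G.J (ω (j + m))) :
    dist (pcomp G.T ω j m x) (pcomp G.T ω j m y) ≤ F.card * (L * B) := by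
  refine dist_le_card_mul_of_connected (G.J_conn _).isPreconnected ?_ F x (by positivity)
    (hF _ x hx) ?_ hx hy
  · intro p hp
    exact (pcomp_differentiableAt G hω j m
      (J_subset_O G _ hp)).1.continuousAt.continuousWithinAt
  · intro p hp p' hp' hpp
    exact (dist_pcomp_le_of_ball G hδ hω j m hp' (mem_ball.2 hpp) (hL p' hp')).trans
      (mul_le_mul_of_nonneg_left (hdist p hp p' hp' hpp) hL0)

lemma dist_pcomp_le_pow (G : SGIFS D V) {δ : ℝ} (hδ0 : 0 < δ)
    (hδ : ∀ v, ∀ x ∈ G.J v, ball x δ ⊆ G.O v)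
    {F : Finset (Pt D)} (hF : ∀ v, ∀ x₀ ∈ G.J v, G.J v ⊆ ⋃ f ∈ F, ball (x₀ + f) (δ / 2))
    {ρ : ℝ} (hρ0 : 0 ≤ ρ) (hρ : G.r ≤ ρ)
    {ω : ℕ → V} (hω : ω ∈ TMS G.E) (j m : ℕ) {x y z : Pt D} (hx : x ∈ G.J (ω (j + m)))
    (hy : y ∈ G.J (ω (j + m))) (hz : z ∈ ball x δ) :
    dist (pcomp G.T ω j m z) (pcomp G.T ω j m y) ≤ (F.card + 1) * δ * ρ ^ m := by
  have hL : ∀ x ∈ G.J (ω (j + m)), ∀ y ∈ ball x δ, dprod G.T ω j m y ≤ ρ ^ m :=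
    fun x hx y hy => dprod_le_pow G hω hρ0 hρ j m (hδ _ x hx hy)
  have hρm : 0 ≤ ρ ^ m := by positivity
  have h1 := dist_pcomp_le_of_ball G hδ hω j m hx hz (hL x hx)
  have h2 := dist_pcomp_le_of_J G hδ hF hω j m hρm hδ0.le hL
    (fun _ _ _ _ h => h.le) hx hy
  have h3 : ρ ^ m * dist z x ≤ ρ ^ m * δ :=
    mul_le_mul_of_nonneg_left (mem_ball.1 hz).le hρm
  have h4 := dist_triangle (pcomp G.T ω j m z) (pcomp G.T ω j m x) (pcomp G.T ω j m y)
  linarith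

/-- Bounded distortion along compositions of arbitrary length: the logarithmic distortion is
dominated by a geometric series with ratio `ρ ^ β`. -/
lemma exists_distortion (G : SGIFS D V) (hBD : CondBD G.E G.O G.T) {δ : ℝ} (hδ0 : 0 < δ)
    (hδ : ∀ v, ∀ x ∈ G.J v, ball x δ ⊆ G.O v)
    {F : Finset (Pt D)} (hF : ∀ v, ∀ x₀ ∈ G.J v, G.J v ⊆ ⋃ f ∈ F, ball (x₀ + f) (δ / 2))
    {ρ : ℝ} (hρ0 : 0 < ρ) (hρ1 : ρ < 1) (hρ : G.r ≤ ρ) :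
    ∃ C > 0, ∀ ω ∈ TMS G.E, ∀ j m, ∀ x ∈ G.J (ω (j + m)), ∀ y ∈ G.J (ω (j + m)),
      ∀ z ∈ ball x δ, dprod G.T ω j m z ≤ C * dprod G.T ω j m y := by
  obtain ⟨c, hc, β, ⟨hβ0, -⟩, h⟩ := hBD
  set B : ℝ := (F.card + 1) * δ with hB
  have hB0 : 0 < B := by positivity
  have hstep : ∀ ω ∈ TMS G.E, ∀ j m, ∀ x ∈ G.J (ω (j + m)), ∀ y ∈ G.J (ω (j + m)),
      ∀ z ∈ ball x δ, dprod G.T ω j m z ≤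
        Real.exp (∑ i ∈ Finset.range m, c * B ^ β * (ρ ^ β) ^ i) * dprod G.T ω j m y := by
    intro ω hω j m
    induction m generalizing j with
    | zero =>
      intro x _ y _ z _
      simp [dprod]
    | succ m ih =>
      intro x hx y hy z hz
      rw [show j + (m + 1) = j + 1 + m by omega] at hx hy
      have hzO := pcomp_mapsTo_O G hω (j + 1) m (hδ _ x hx hz)
      have hyO := pcomp_mapsTo_O G hω (j + 1) m (J_subset_O G _ hy)
      have hd := dist_pcomp_le_pow G hδ0 hδ hF hρ0.le hρ hω (j + 1) m hx hy hz
      have hbd := h (hω j) _ hyO _ hzO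
      rw [dist_comm] at hbd
      have hdβ : dist (pcomp G.T ω (j + 1) m z) (pcomp G.T ω (j + 1) m y) ^ β ≤
          B ^ β * (ρ ^ β) ^ m := by
        calc _ ≤ (B * ρ ^ m) ^ β := Real.rpow_le_rpow dist_nonneg hd hβ0.le
          _ = B ^ β * (ρ ^ β) ^ m := by
            rw [Real.mul_rpow hB0.le (by positivity), ← Real.rpow_natCast, ← Real.rpow_natCast,
              ← Real.rpow_mul hρ0.le, ← Real.rpow_mul hρ0.le, mul_comm (m : ℝ)]
      set Nz := ‖fderiv ℝ (G.T (ω j) (ω (j + 1))) (pcomp G.T ω (j + 1) m z)‖ with hNz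
      set Ny := ‖fderiv ℝ (G.T (ω j) (ω (j + 1))) (pcomp G.T ω (j + 1) m y)‖ with hNy
      have hNy0 : 0 ≤ Ny := norm_nonneg _
      have hN : Nz ≤ Real.exp (c * B ^ β * (ρ ^ β) ^ m) * Ny := by
        have h1 : Nz ≤ Ny * (c * (B ^ β * (ρ ^ β) ^ m) + 1) := by
          have h2 : c * Ny * dist (pcomp G.T ω (j + 1) m z) (pcomp G.T ω (j + 1) m y) ^ β ≤
              c * Ny * (B ^ β * (ρ ^ β) ^ m) := mul_le_mul_of_nonneg_left hdβ (by positivity)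
          have h3 := (abs_le.1 hbd).1
          nlinarith
        have h4 := Real.add_one_le_exp (c * B ^ β * (ρ ^ β) ^ m)
        calc Nz ≤ Ny * (c * (B ^ β * (ρ ^ β) ^ m) + 1) := h1
          _ = (c * B ^ β * (ρ ^ β) ^ m + 1) * Ny := by ring
          _ ≤ _ := mul_le_mul_of_nonneg_right h4 hNy0
      rw [Finset.sum_range_succ, Real.exp_add]
      simp only [dprod]
      calc Nz * dprod G.T ω (j + 1) m z ≤ (Real.exp (c * B ^ β * (ρ ^ β) ^ m) * Ny) *
            (Real.exp (∑ i ∈ Finset.range m, c * B ^ β * (ρ ^ β) ^ i) *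
              dprod G.T ω (j + 1) m y) :=
            mul_le_mul hN (ih (j + 1) x hx y hy z hz) (dprod_nonneg _ _ _ _ _) (by positivity)
        _ = _ := by ring
  have hρβ0 : 0 ≤ ρ ^ β := by positivity
  have hρβ1 : ρ ^ β < 1 := Real.rpow_lt_one hρ0.le hρ1 hβ0
  refine ⟨Real.exp (c * B ^ β * (1 - ρ ^ β)⁻¹), Real.exp_pos _, ?_⟩
  intro ω hω j m x hx y hy z hz
  refine (hstep ω hω j m x hx y hy z hz).trans
    (mul_le_mul_of_nonneg_right (Real.exp_le_exp.2 ?_) (dprod_nonneg _ _ _ _ _))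
  rw [← Finset.mul_sum]
  refine mul_le_mul_of_nonneg_left ?_ (by positivity)
  rw [← tsum_geometric_of_lt_one hρβ0 hρβ1]
  exact (summable_geometric_of_lt_one hρβ0 hρβ1).sum_le_tsum _ (fun i _ => by positivity)

/-! ### Diameters of coded cylinders -/

/-- In a strongly connected graph, the admissible word `ω₀ ⋯ ω_m u` extends to an infinite
admissible sequence. -/
lemma exists_extension {E : V → V → Prop} (hSC : ∀ v u : V, Chain E v u) {ω : ℕ → V}
    (hω : ω ∈ TMS E) (m : ℕ) {u : V} (hu : E (ω m) u) :
    ∃ ω' ∈ TMS E, (∀ i ≤ m, ω' i = ω i) ∧ ω' (m + 1) = u := by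
  have hnext : ∀ v, ∃ v', E v v' := by
    intro v
    obtain ⟨k, w, hk, h0, -, hw⟩ := hSC v v
    exact ⟨w 1, h0 ▸ hw 0 (by omega)⟩
  choose nx hnx using hnext
  refine ⟨fun n => if n ≤ m then ω n else nx^[n - (m + 1)] u, ?_, ?_, ?_⟩
  · intro n
    rcases lt_trichotomy n m with h | h | h
    · simpa [h.le, Nat.succ_le_of_lt h] using hω n
    · subst h
      simpa using hu
    · have h1 : ¬ n ≤ m := by omega
      have h2 : ¬ n + 1 ≤ m := by omega
      simp only [h1, h2, if_false]
      rw [show n + 1 - (m + 1) = (n - (m + 1)) + 1 by omega, Function.iterate_succ_apply']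
      exact hnx _
  · intro i hi
    simp [hi]
  · simp

/-- The diameter of the coded image of a cylinder of length `m + 1` is controlled by the Birkhoff
sum of *the same* length `m + 1`: the composition has only `m` factors, and the missing factor is
supplied by `(G.9)_J`, which bounds the diameter of the last seed set. -/
lemma exists_dist_coding_le [Nontrivial (Pt D)] (G : SGIFS D V)
    (hSC : ∀ v u : V, Chain G.E v u) (hBD : CondBD G.E G.O G.T) (hG9 : CondG9 G.E G.J G.T)
    {π : (ℕ → V) → Pt D} (hπ : IsCodingMap G.E G.J G.T π) {ρ : ℝ} (hρ0 : 0 < ρ) (hρ1 : ρ < 1)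
    (hρ : G.r ≤ ρ) :
    ∃ C ≥ 0, ∀ m (w : Fin (m + 1) → V), (cylSet G.E (m + 1) w).Nonempty →
      ∃ ω' ∈ cylSet G.E (m + 1) w, ∀ ω₁ ∈ cylSet G.E (m + 1) w, ∀ ω₂ ∈ cylSet G.E (m + 1) w,
        dist (π ω₁) (π ω₂) ≤ C * Real.exp (birkhoff (phiU G.T π) (m + 1) ω') := by
  obtain ⟨δ, hδ0, hδ⟩ := exists_ball_subset_O G
  obtain ⟨F, hF⟩ := exists_uniform_cover G hδ0
  obtain ⟨C, hC0, hC⟩ := exists_distortion G hBD hδ0 hδ hF hρ0 hρ1 hρ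
  obtain ⟨c₁, hc₁, h9⟩ := hG9
  refine ⟨F.card * (C * (c₁ * (2 * C))), by positivity, fun m w hw => ?_⟩
  obtain ⟨ω, hω, hωw⟩ := hw
  -- an edge and a point nearly realizing the supremum in `(G.9)_J` at the last vertex
  obtain ⟨u, hu, z, hz, hzJ⟩ : ∃ u, G.E (ω m) u ∧ ∃ z ∈ G.J u,
      diam (G.J (ω m)) ≤ c₁ * (2 * ‖fderiv ℝ (G.T (ω m) u) z‖) := by
    set A := {t : ℝ | ∃ u, G.E (ω m) u ∧ ∃ z ∈ G.J u, t = ‖fderiv ℝ (G.T (ω m) u) z‖} with hA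
    have hbdd : BddAbove A := by
      refine ⟨ρ, ?_⟩
      rintro _ ⟨u, hu, z, hz, rfl⟩
      exact (G.T_contr hu z (J_subset_O G _ hz)).trans hρ
    obtain ⟨z₀, hz₀⟩ := (G.J_conn (ω (m + 1))).nonempty
    have hmem : ‖fderiv ℝ (G.T (ω m) (ω (m + 1))) z₀‖ ∈ A := ⟨_, hω m, z₀, hz₀, rfl⟩
    have hpos : 0 < sSup A :=
      (fderiv_pos G (hω m) (J_subset_O G _ hz₀)).trans_le (le_csSup hbdd hmem)
    obtain ⟨_, ⟨u, hu, z, hz, rfl⟩, hlt⟩ := exists_lt_of_lt_csSup ⟨_, hmem⟩ (half_lt_self hpos)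
    refine ⟨u, hu, z, hz, (h9 (ω m)).trans (mul_le_mul_of_nonneg_left ?_ hc₁.le)⟩
    linarith
  obtain ⟨ω', hω', heq, hu'⟩ := exists_extension hSC hω m hu
  have hcyl : ω' ∈ cylSet G.E (m + 1) w :=
    ⟨hω', fun i => (heq i (by omega)).trans (hωw i)⟩
  refine ⟨ω', hcyl, fun ω₁ h₁ ω₂ h₂ => ?_⟩
  have hsame : ∀ ω₁ ∈ cylSet G.E (m + 1) w, ∀ i ≤ m, ω₁ (0 + i) = ω' (0 + i) := by
    intro ω₁ h₁ i hi
    rw [zero_add]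
    exact (h₁.2 ⟨i, by omega⟩).trans (hcyl.2 ⟨i, by omega⟩).symm
  have hcode : ∀ ω₁ ∈ cylSet G.E (m + 1) w, π (shift^[m] ω₁) ∈ G.J (ω' (0 + m)) ∧
      pcomp G.T ω' 0 m (π (shift^[m] ω₁)) = π ω₁ := by
    intro ω₁ h₁
    constructor
    · rw [← hsame ω₁ h₁ m le_rfl, zero_add]
      exact coding_shift_mem_J G hπ h₁.1 m
    · rw [← pcomp_congr G.T 0 m (hsame ω₁ h₁)]
      simpa using pcomp_coding G hπ h₁.1 0 m
  set L := C * dprod G.T ω' 0 m (π (shift^[m] ω')) with hL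
  have hL0 : 0 ≤ L := mul_nonneg hC0.le (dprod_nonneg _ _ _ _ _)
  have hmain := dist_pcomp_le_of_J G hδ hF hω' 0 m hL0 (B := diam (G.J (ω' (0 + m)))) diam_nonneg
    (fun x hx y hy => hC ω' hω' 0 m x hx _ (hcode ω' hcyl).1 y hy)
    (fun x hx y hy _ => dist_le_diam_of_mem (G.J_cpt _).isBounded hx hy)
    (hcode ω₁ h₁).1 (hcode ω₂ h₂).1
  rw [(hcode ω₁ h₁).2, (hcode ω₂ h₂).2] at hmain
  -- the last factor, compared with its value at the coded point
  have hlast : ‖fderiv ℝ (G.T (ω' m) (ω' (m + 1))) z‖ ≤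
      C * ‖fderiv ℝ (G.T (ω' m) (ω' (m + 1))) (π (shift^[m + 1] ω'))‖ := by
    have := hC ω' hω' m 1 z (by rwa [hu']) (π (shift^[m + 1] ω'))
      (coding_shift_mem_J G hπ hω' (m + 1)) z (mem_ball_self hδ0)
    simpa [dprod, pcomp] using this
  have hdiam : diam (G.J (ω' (0 + m))) ≤
      c₁ * (2 * (C * ‖fderiv ℝ (G.T (ω' m) (ω' (m + 1))) (π (shift^[m + 1] ω'))‖)) := by
    rw [zero_add]
    rw [hu'] at hlast ⊢
    rw [heq m le_rfl] at hlast ⊢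
    refine hzJ.trans ?_
    gcongr
  have hexp : Real.exp (birkhoff (phiU G.T π) (m + 1) ω') =
      dprod G.T ω' 0 m (π (shift^[m] ω')) *
        ‖fderiv ℝ (G.T (ω' m) (ω' (m + 1))) (π (shift^[m + 1] ω'))‖ := by
    rw [birkhoff, Finset.sum_range_succ, Real.exp_add, exp_phiU G hπ hω' m]
    have := exp_birkhoff_eq_dprod G hπ hω' 0 m
    simp only [zero_add, Function.iterate_zero, id] at this
    rw [← this]
    rfl
  calc dist (π ω₁) (π ω₂) ≤ F.card * (L * diam (G.J (ω' (0 + m)))) := hmain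
    _ ≤ F.card * (L * (c₁ * (2 * (C *
          ‖fderiv ℝ (G.T (ω' m) (ω' (m + 1))) (π (shift^[m + 1] ω'))‖)))) := by gcongr
    _ = _ := by rw [hexp, hL]; ring

/-! ### Pressure and Hausdorff measure -/

/-- Nonpositive pressure means that the partition functions grow subexponentially. -/
lemma eventually_pressureZ_le {S : Type*} {A : S → S → Prop} {f : (ℕ → S) → ℝ}
    (h : pressure A f ≤ 0) {ε : ℝ} (hε : 0 < ε) :
    ∀ᶠ n : ℕ in atTop, pressureZ A f n ≤ ENNReal.ofReal (Real.exp (n * ε)) := by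
  have h1 : pressure A f < (ε : EReal) := h.trans_lt (by exact_mod_cast hε)
  filter_upwards [eventually_lt_of_limsup_lt h1, eventually_gt_atTop 0] with n hn hn0
  have hn' : (0 : ℝ) < n := by exact_mod_cast hn0
  have hinv : ((n : ℝ)⁻¹ : EReal) = (((n : ℝ)⁻¹ : ℝ) : EReal) := rfl
  rw [hinv] at hn
  rcases eq_or_ne (pressureZ A f n) 0 with h0 | h0
  · simp [h0]
  rcases eq_or_ne (pressureZ A f n) ⊤ with ht | ht
  · exfalso
    rw [elog, if_neg h0, if_pos ht, EReal.coe_mul_top_of_pos (inv_pos.2 hn')] at hn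
    exact not_top_lt hn
  · rw [elog, if_neg h0, if_neg ht, ← EReal.coe_mul, EReal.coe_lt_coe_iff] at hn
    rw [← ENNReal.ofReal_toReal ht]
    apply ENNReal.ofReal_le_ofReal
    rw [← Real.log_le_iff_le_exp (ENNReal.toReal_pos h0 ht)]
    rw [inv_mul_lt_iff₀ hn'] at hn
    exact hn.le

lemma birkhoff_const_mul {S : Type*} (f : (ℕ → S) → ℝ) (s : ℝ) (n : ℕ) (ω : ℕ → S) :
    birkhoff (fun ω => s * f ω) n ω = s * birkhoff f n ω := by
  simp [birkhoff, Finset.mul_sum]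

lemma birkhoff_phiU_le [Nontrivial (Pt D)] (G : SGIFS D V) {π : (ℕ → V) → Pt D}
    (hπ : IsCodingMap G.E G.J G.T π) {ρ : ℝ} (hρ0 : 0 < ρ) (hρ : G.r ≤ ρ) {ω : ℕ → V}
    (hω : ω ∈ TMS G.E) (n : ℕ) : birkhoff (phiU G.T π) n ω ≤ n * Real.log ρ := by
  rw [← Real.exp_le_exp, mul_comm, Real.exp_mul, Real.exp_log hρ0, Real.rpow_natCast]
  have h := exp_birkhoff_eq_dprod G hπ hω 0 n
  simp only [zero_add, Function.iterate_zero, id] at h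
  rw [h]
  exact dprod_le_pow G hω hρ0.le hρ 0 n
    (by simpa using J_subset_O G _ (coding_shift_mem_J G hπ hω n))

/-- Since every factor of the system contracts by `ρ`, raising the exponent from `s` to `t` gains
`ρ ^ (t - s)` per step; with nonpositive pressure at `s` the partition functions at `t > s` are
eventually at most `1`. -/
lemma eventually_pressureZ_le_one [Nontrivial (Pt D)] (G : SGIFS D V) {π : (ℕ → V) → Pt D}
    (hπ : IsCodingMap G.E G.J G.T π) {ρ : ℝ} (hρ0 : 0 < ρ) (hρ1 : ρ < 1) (hρ : G.r ≤ ρ)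
    {s t : ℝ} (hst : s < t) (hs : pressure G.E (fun ω => s * phiU G.T π ω) ≤ 0) :
    ∀ᶠ n : ℕ in atTop, pressureZ G.E (fun ω => t * phiU G.T π ω) n ≤ 1 := by
  have hlog : Real.log ρ < 0 := Real.log_neg hρ0 hρ1
  have hε : 0 < (t - s) * -Real.log ρ := mul_pos (by linarith) (by linarith)
  filter_upwards [eventually_pressureZ_le hs hε] with n hn
  have hle : pressureZ G.E (fun ω => t * phiU G.T π ω) n ≤
      ENNReal.ofReal (Real.exp (-(n * ((t - s) * -Real.log ρ)))) *
        pressureZ G.E (fun ω => s * phiU G.T π ω) n := by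
    rw [pressureZ, pressureZ, ← ENNReal.tsum_mul_left]
    refine ENNReal.tsum_le_tsum fun w => iSup₂_le fun ω hω => ?_
    refine le_trans ?_ (mul_le_mul_right (le_iSup₂ ω hω) _)
    rw [← ENNReal.ofReal_mul (Real.exp_pos _).le, ← Real.exp_add, birkhoff_const_mul,
      birkhoff_const_mul]
    apply ENNReal.ofReal_le_ofReal
    rw [Real.exp_le_exp]
    have h1 := mul_le_mul_of_nonneg_left (birkhoff_phiU_le G hπ hρ0 hρ hω.1 n)
      (sub_nonneg.2 hst.le)
    linarith
  refine hle.trans ((mul_le_mul_right hn _).trans ?_)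
  rw [← ENNReal.ofReal_mul (Real.exp_pos _).le, ← Real.exp_add]
  simp

lemma ediam_coding_cylinder [Nontrivial (Pt D)] (G : SGIFS D V) {π : (ℕ → V) → Pt D}
    {C : ℝ} (hC0 : 0 ≤ C)
    (hC : ∀ m (w : Fin (m + 1) → V), (cylSet G.E (m + 1) w).Nonempty →
      ∃ ω' ∈ cylSet G.E (m + 1) w, ∀ ω₁ ∈ cylSet G.E (m + 1) w, ∀ ω₂ ∈ cylSet G.E (m + 1) w,
        dist (π ω₁) (π ω₂) ≤ C * Real.exp (birkhoff (phiU G.T π) (m + 1) ω'))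
    {t : ℝ} (ht : 0 < t) (m : ℕ) (w : Fin (m + 1) → V) :
    ediam (π '' cylSet G.E (m + 1) w) ^ t ≤ ENNReal.ofReal (C ^ t) *
      ⨆ ω ∈ cylSet G.E (m + 1) w,
        ENNReal.ofReal (Real.exp (birkhoff (fun ω => t * phiU G.T π ω) (m + 1) ω)) := by
  rcases (cylSet G.E (m + 1) w).eq_empty_or_nonempty with he | hne
  · simp [he, ENNReal.zero_rpow_of_pos ht]
  obtain ⟨ω', hω', h⟩ := hC m w hne
  have h1 : ediam (π '' cylSet G.E (m + 1) w) ≤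
      ENNReal.ofReal (C * Real.exp (birkhoff (phiU G.T π) (m + 1) ω')) := by
    refine Metric.ediam_le ?_
    rintro _ ⟨ω₁, h₁, rfl⟩ _ ⟨ω₂, h₂, rfl⟩
    rw [edist_dist]
    exact ENNReal.ofReal_le_ofReal (h ω₁ h₁ ω₂ h₂)
  refine (ENNReal.rpow_le_rpow h1 ht.le).trans ?_
  rw [ENNReal.ofReal_rpow_of_nonneg (by positivity) ht.le,
    Real.mul_rpow hC0 (Real.exp_pos _).le, ENNReal.ofReal_mul (by positivity), ← Real.exp_mul,
    mul_comm _ t, ← birkhoff_const_mul]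
  exact mul_le_mul_right (le_iSup₂ (f := fun ω (_ : ω ∈ cylSet G.E (m + 1) w) =>
    ENNReal.ofReal (Real.exp (birkhoff (fun ω => t * phiU G.T π ω) (m + 1) ω))) ω' hω') _

lemma dimH_le_of_pressure_nonpos [Nontrivial (Pt D)] [Countable V] (G : SGIFS D V)
    (hSC : ∀ v u : V, Chain G.E v u) (hBD : CondBD G.E G.O G.T) (hG9 : CondG9 G.E G.J G.T)
    {π : (ℕ → V) → Pt D} (hπ : IsCodingMap G.E G.J G.T π) {s t : ℝ} (hs0 : 0 ≤ s) (hst : s < t)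
    (hs : pressure G.E (fun ω => s * phiU G.T π ω) ≤ 0) :
    dimH (π '' TMS G.E) ≤ ENNReal.ofReal t := by
  have ht : 0 < t := hs0.trans_lt hst
  -- `G.r` may be nonpositive when the graph has no edges
  obtain ⟨ρ, hρ0, hρ1, hρ⟩ : ∃ ρ : ℝ, 0 < ρ ∧ ρ < 1 ∧ G.r ≤ ρ :=
    ⟨max G.r (1 / 2), by positivity, max_lt G.hr (by norm_num), le_max_left _ _⟩
  obtain ⟨C, hC0, hC⟩ := exists_dist_coding_le G hSC hBD hG9 hπ hρ0 hρ1 hρ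
  have hr : Tendsto (fun m : ℕ => ENNReal.ofReal (C * ρ ^ (m + 1))) atTop (𝓝 0) := by
    have h1 : Tendsto (fun m : ℕ => C * ρ ^ (m + 1)) atTop (𝓝 (C * 0)) :=
      ((tendsto_pow_atTop_nhds_zero_of_lt_one hρ0.le hρ1).comp (tendsto_add_atTop_nat 1)).const_mul C
    simpa using ENNReal.tendsto_ofReal h1
  have hH := MeasureTheory.Measure.hausdorffMeasure_le_liminf_tsum
    (ι := fun m => Fin (m + 1) → V) t (π '' TMS G.E) _ hr
    (fun m w => π '' cylSet G.E (m + 1) w)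
    (Eventually.of_forall fun m w => by
      refine Metric.ediam_le ?_
      rintro _ ⟨ω₁, h₁, rfl⟩ _ ⟨ω₂, h₂, rfl⟩
      obtain ⟨ω', hω', h⟩ := hC m w ⟨ω₁, h₁⟩
      rw [edist_dist]
      refine ENNReal.ofReal_le_ofReal ((h ω₁ h₁ ω₂ h₂).trans
        (mul_le_mul_of_nonneg_left ?_ hC0))
      refine (Real.exp_le_exp.2 (birkhoff_phiU_le G hπ hρ0 hρ hω'.1 (m + 1))).trans_eq ?_
      rw [mul_comm, Real.exp_mul, Real.exp_log hρ0, Real.rpow_natCast])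
    (Eventually.of_forall fun m => by
      rintro _ ⟨ω, hω, rfl⟩
      exact mem_iUnion.2 ⟨fun i => ω i, ω, ⟨hω, fun _ => rfl⟩, rfl⟩)
  have hfin : MeasureTheory.Measure.hausdorffMeasure t (π '' TMS G.E) ≤
      ENNReal.ofReal (C ^ t) := by
    refine hH.trans (liminf_le_of_frequently_le' (Eventually.frequently ?_))
    filter_upwards [(tendsto_add_atTop_nat 1).eventually
      (eventually_pressureZ_le_one G hπ hρ0 hρ1 hρ hst hs)] with m hm
    calc ∑' w : Fin (m + 1) → V, ediam (π '' cylSet G.E (m + 1) w) ^ t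
        ≤ ∑' w : Fin (m + 1) → V, ENNReal.ofReal (C ^ t) * ⨆ ω ∈ cylSet G.E (m + 1) w,
            ENNReal.ofReal (Real.exp (birkhoff (fun ω => t * phiU G.T π ω) (m + 1) ω)) :=
          ENNReal.tsum_le_tsum fun w => ediam_coding_cylinder G hC0 hC ht m w
      _ = ENNReal.ofReal (C ^ t) * pressureZ G.E (fun ω => t * phiU G.T π ω) (m + 1) := by
          rw [ENNReal.tsum_mul_left, pressureZ]
      _ ≤ ENNReal.ofReal (C ^ t) * 1 := mul_le_mul_right hm _
      _ = ENNReal.ofReal (C ^ t) := mul_one _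
  rw [ENNReal.ofReal]
  apply dimH_le_of_hausdorffMeasure_ne_top
  rw [Real.coe_toNNReal t ht.le]
  exact (hfin.trans_lt ENNReal.ofReal_lt_top).ne

end Aux

/-- Upper estimate of the Hausdorff dimension of the limit set of a
strongly connected simple GIFS under `(G.7)_B` and `(G.9)_J`:
`dim_H K ≤ s̄ = inf {s ≥ 0 : P(sφ) ≤ 0}`. -/
theorem dimH_limit_set_le_of_stronglyConnected
    {D : ℕ} {V : Type*} [Countable V] (G : SGIFS D V)
    (hSC : ∀ v u : V, Chain G.E v u)
    (hBD : CondBD G.E G.O G.T)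
    (hG9 : CondG9 G.E G.J G.T)
    (π : (ℕ → V) → Pt D) (hπ : IsCodingMap G.E G.J G.T π) :
    dimH (π '' TMS G.E) ≤
      ⨅ (s : ℝ) (_ : 0 ≤ s)
        (_ : pressure G.E (fun ω => s * phiU G.T π ω) ≤ (0 : EReal)),
        ENNReal.ofReal s := by
  refine le_iInf fun s => le_iInf fun hs0 => le_iInf fun hs => ?_
  rcases subsingleton_or_nontrivial (Pt D) with hD | hD
  · rw [(Set.subsingleton_of_subsingleton (s := π '' TMS G.E)).dimH_zero]
    exact zero_le
  have hlim : ∀ᶠ t in 𝓝[>] s, dimH (π '' TMS G.E) ≤ ENNReal.ofReal t :=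
    eventually_mem_nhdsWithin.mono fun t ht =>
      dimH_le_of_pressure_nonpos G hSC hBD hG9 hπ hs0 ht hs
  exact ge_of_tendsto
    ((ENNReal.continuous_ofReal.tendsto s).mono_left nhdsWithin_le_nhds) hlim
end

section
/- Let (G=(V,E),(J_v),(O_v),(T_{vu})) be a simple GIFS with G strongly connected, satisfying the strong separation condition (G.6)_S and the inverse bounded distortion condition (G.7)_{BI}. Let W_v ⊆ J_v (v ∈ V) be nonempty sets with T_{vu}(W_u) ⊆ W_v for all vu ∈ E, and for edges vu, vu′ ∈ E with u ≠ u′ set Δ(v,u,u′) := dist(T_{vu}(W_u), T_{vu′}(W_{u′})). Then there exists a constant c > 0 such that for every path w = w₁⋯w_k in G (k ≥ 1), all u ≠ u′ with w_ku, w_ku′ ∈ E, and every z ∈ J_{w_k}: dist(T_w(T_{w_ku}(W_u)), T_w(T_{w_ku′}(W_{u′}))) ≥ c·Δ(w_k,u,u′)·∏_{i=1}^{k−1} ‖T′_{w_iw_{i+1}}(T_{w_{i+1}⋯w_k}(z))‖_i. -/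
/-!
Write `T_w` for the composition along a path `w` of `n` edges ending at `v`. It suffices to bound
`dist (T_w x) (T_w y)` below by a uniform multiple of `dist x y * ∏ ‖T'‖_i` for all points `x, y`
of the seed set `J_v`; the claim for sets follows by taking infima, since `T_{vu}(W_u) ⊆ J_v`.

* Contraction on seed sets (`dist_le_card_mul_of_cover`). `T_w` contracts by `r ^ n` on balls of a
  fixed radius `ρ` about points of `J_v`, because these lie in `O_v`. As `J_v` is connected and
  covered by a number of such balls independent of `v`, the image `T_w(J_v)` has diameter
  at most `const * r ^ n`.
* Distortion. Hence the orbits under the tails of `w` of two points within `ρ` of `J_v` approach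
  each other geometrically, and the distortion condition makes the products `∏ ‖T'‖_i` along
  both orbits comparable up to a uniform factor `C`.
* Lifting (`le_mul_dist_of_notMem_ball`). With `s = min (dist x y) ρ`, the inverse derivatives of
  `T_w` on `ball x s` are bounded by `R = C / ∏ ‖T'‖_i`. A segment from `T_w x` of length less than
  `s / R` lifts into `ball x s`; as `T_w` is injective and `y` is outside that ball,
  `dist (T_w x) (T_w y) ≥ s / R`. Since `dist x y` is bounded uniformly, so is `dist x y / s`.
-/

open scoped ENNReal NNReal Topology
open Filter Set Metric

noncomputable section

/-- Distance between two sets in a metric space. -/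
def setDist {α : Type*} [MetricSpace α] (s t : Set α) : ℝ :=
  sInf {d : ℝ | ∃ x ∈ s, ∃ y ∈ t, d = dist x y}

end

/-! ### Two facts on maps of Euclidean space -/

/-- Chaining estimate: a map which moves `ρ`-close points of a connected set `J` at most `ε` apart
has image of diameter at most `N * ε`, where `N` is the number of balls in a cover of `J` by
`ρ / 2`-balls.
The distance to `f x` maps `J` onto a set of reals containing `[0, dist (f z) (f x)]`, and
each ball of the cover contributes at most `ε` to the length of that interval. -/
lemma dist_le_card_mul_of_cover {D : ℕ} {J : Set (Pt D)} (hJ : IsPreconnected J)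
    {f : Pt D → Pt D} (hf : ContinuousOn f J) {ρ ε : ℝ} (hε : 0 ≤ ε)
    (hclose : ∀ p ∈ J, ∀ q ∈ J, dist p q < ρ → dist (f p) (f q) ≤ ε)
    (a : Pt D) (t : Finset (Pt D)) (hcov : J ⊆ ⋃ i ∈ t, ball (a + i) (ρ / 2))
    {x z : Pt D} (hx : x ∈ J) (hz : z ∈ J) : dist (f z) (f x) ≤ t.card * ε := by
  set g : Pt D → ℝ := fun p => dist (f p) (f x) with hg
  have hgc : ContinuousOn g J := 
    continuous_dist.comp_continuousOn (hf.prodMk continuousOn_const)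
  have hconn : IsPreconnected (g '' J) := hJ.image g hgc
  have hsub : Icc 0 (dist (f z) (f x)) ⊆ ⋃ i ∈ t, g '' (J ∩ ball (a + i) (ρ / 2)) := by
    have h1 : Icc (g x) (g z) ⊆ g '' J :=
      hconn.Icc_subset (mem_image_of_mem g hx) (mem_image_of_mem g hz)
    intro s hs
    have : s ∈ g '' J := h1 (by simpa [hg] using hs)
    obtain ⟨p, hp, rfl⟩ := this
    obtain ⟨i, hi, hpi⟩ := mem_iUnion₂.1 (hcov hp)
    exact mem_iUnion₂.2 ⟨i, hi, p, ⟨hp, hpi⟩, rfl⟩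
  have hvol : MeasureTheory.volume (Icc 0 (dist (f z) (f x))) ≤ ∑ i ∈ t, ENNReal.ofReal ε := by
    refine (MeasureTheory.measure_mono hsub).trans
      ((MeasureTheory.measure_biUnion_finset_le _ _).trans (Finset.sum_le_sum fun i _ => ?_))
    refine (Real.volume_le_diam _).trans (ediam_le ?_)
    rintro _ ⟨p, ⟨hp, hpi⟩, rfl⟩ _ ⟨q, ⟨hq, hqi⟩, rfl⟩
    rw [edist_dist]
    refine ENNReal.ofReal_le_ofReal ?_
    have h2 : dist p q < ρ := by
      have := dist_triangle_right p q (a + i)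
      rw [mem_ball] at hpi hqi
      linarith
    exact (dist_dist_dist_le_left _ _ _).trans (hclose p hp q hq h2)
  rw [Real.volume_Icc, sub_zero, Finset.sum_const, nsmul_eq_mul, ← ENNReal.ofReal_natCast,
    ← ENNReal.ofReal_mul (by positivity)] at hvol
  exact (ENNReal.ofReal_le_ofReal_iff (by positivity)).1 hvol

/-- Lifting a segment: if the inverse derivatives of `f` are bounded by `R` on `ball x s` and `y`
lies outside that ball, then `s ≤ R * dist (f x) (f y)`. Otherwise the segment
from `f x` to `f y` would lift through `f` to a curve inside the ball ending at `y`. -/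
lemma le_mul_dist_of_notMem_ball {D : ℕ} {U : Set (Pt D)} {f : Pt D → Pt D} (hinj : InjOn f U)
    {x y : Pt D} {s R : ℝ} (hR : 0 ≤ R) (hball : ball x s ⊆ U) (hyU : y ∈ U)
    (hy : y ∉ ball x s)
    (hder : ∀ p ∈ ball x s, ∃ e : Pt D ≃L[ℝ] Pt D,
      HasStrictFDerivAt f (e : Pt D →L[ℝ] Pt D) p ∧
      ‖(e.symm : Pt D →L[ℝ] Pt D)‖ ≤ R) :
    s ≤ R * dist (f x) (f y) := by
  by_contra! hlt
  set d := dist (f x) (f y) with hd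
  have hd0 : 0 ≤ d := dist_nonneg
  -- A slightly larger constant `R'` leaves room for the Lipschitz constant of the local inverse.
  obtain ⟨R', hRR', hR's⟩ : ∃ R', R < R' ∧ R' * d < s := by
    have hc : Tendsto (fun R' : ℝ => R' * d) (𝓝[>] R) (𝓝 (R * d)) :=
      ((continuous_id.mul continuous_const).tendsto R).mono_left nhdsWithin_le_nhds
    obtain ⟨R', h1, h2⟩ := ((hc.eventually (gt_mem_nhds hlt)).and self_mem_nhdsWithin).exists
    exact ⟨R', h2, h1⟩
  have hR'0 : 0 < R' := hR.trans_lt hRR'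
  set γ : ℝ → Pt D := fun t => f x + t • (f y - f x) with hγ
  have hγc : Continuous γ := by fun_prop
  have hγd : ∀ t t', t ≤ t' → dist (γ t') (γ t) = (t' - t) * d := by
    intro t t' htt
    have h1 : γ t' - γ t = (t' - t) • (f y - f x) := by simp only [hγ, sub_smul]; abel
    rw [dist_eq_norm, h1, norm_smul, Real.norm_of_nonneg (by linarith), hd, dist_eq_norm,
      norm_sub_rev (f x)]
  have hsub : closedBall x (R' * d) ⊆ ball x s := closedBall_subset_ball hR's
  have hfc : ContinuousOn f (closedBall x (R' * d)) := fun p hp => by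
    obtain ⟨e, he, -⟩ := hder p (hsub hp)
    exact he.continuousAt.continuousWithinAt
  set A : Set ℝ := {t | ∃ p ∈ closedBall x (R' * d), f p = γ t ∧ dist p x ≤ t * (R' * d)} with hA
  have hclosed : IsClosed (A ∩ Icc 0 1) := by
    set Q : Set (ℝ × Pt D) := Icc 0 1 ×ˢ closedBall x (R' * d)
    have hQ : IsCompact Q := isCompact_Icc.prod (isCompact_closedBall _ _)
    have hfQ : ContinuousOn (fun q : ℝ × Pt D => (f q.2, γ q.1)) Q :=
      (hfc.comp continuousOn_snd fun q hq => hq.2).prodMk (hγc.comp continuous_fst).continuousOn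
    have h1 : IsClosed (Q ∩ (fun q : ℝ × Pt D => (f q.2, γ q.1)) ⁻¹' {w | w.1 = w.2}) :=
      hfQ.preimage_isClosed_of_isClosed hQ.isClosed (isClosed_eq continuous_fst continuous_snd)
    have h2 : IsClosed {q : ℝ × Pt D | dist q.2 x ≤ q.1 * (R' * d)} :=
      isClosed_le (by fun_prop) (by fun_prop)
    have h3 := ((hQ.inter_right h1).inter_right h2).image continuous_fst
    convert h3.isClosed using 1
    ext t
    constructor
    · rintro ⟨⟨p, hp, hpe, hpd⟩, ht⟩
      exact ⟨(t, p), ⟨⟨⟨ht, hp⟩, ⟨ht, hp⟩, hpe⟩, hpd⟩, rfl⟩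
    · rintro ⟨⟨t', p⟩, ⟨⟨⟨ht, hp⟩, -, hpe⟩, hpd⟩, rfl⟩
      exact ⟨⟨p, hp, hpe, hpd⟩, ht⟩
  have h0 : (0 : ℝ) ∈ A := ⟨x, mem_closedBall_self (by positivity), by simp [hγ], by simp⟩
  have hstep : ∀ t ∈ A ∩ Ico 0 1, A ∈ 𝓝[>] t := by
    rintro t ⟨⟨p, hp, hpe, hpd⟩, ht⟩
    obtain ⟨e, he, heR⟩ := hder p (hsub hp)
    have hg := he.to_localInverse
    obtain ⟨N, hN, hLip⟩ := hg.exists_lipschitzOnWith_of_nnnorm_lt R'.toNNReal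
      (by rw [← NNReal.coe_lt_coe, Real.coe_toNNReal _ hR'0.le]; exact heR.trans_lt hRR')
    have hfp := he.localInverse_apply_image
    have hright := he.eventually_right_inverse
    have hγt : Tendsto γ (𝓝[>] t) (𝓝 (f p)) := by
      rw [hpe]; exact (hγc.tendsto t).mono_left nhdsWithin_le_nhds
    have hmemN : f p ∈ N := mem_of_mem_nhds hN
    filter_upwards [hγt hN, hγt.eventually hright, self_mem_nhdsWithin,
      mem_nhdsWithin_of_mem_nhds (Iio_mem_nhds ht.2)] with t' h1 h2 h3 h4
    have h3 : t < t' := h3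
    have h4 : t' < 1 := h4
    have h5 := hLip.dist_le_mul _ h1 _ hmemN
    rw [hfp, Real.coe_toNNReal _ hR'0.le] at h5
    have h6 : dist (γ t') (f p) = (t' - t) * d := by rw [hpe]; exact hγd t t' h3.le
    rw [h6] at h5
    have h7 : dist (he.localInverse f e p (γ t')) x ≤ t' * (R' * d) := by
      have := dist_triangle (he.localInverse f e p (γ t')) p x
      nlinarith
    refine ⟨_, ?_, h2, h7⟩
    rw [mem_closedBall]
    exact h7.trans (mul_le_of_le_one_left (by positivity) h4.le)
  have h1 : (1 : ℝ) ∈ A :=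
    hclosed.Icc_subset_of_forall_mem_nhdsWithin h0 hstep (right_mem_Icc.2 zero_le_one)
  obtain ⟨p, hp, hpe, -⟩ := h1
  have : p = y := hinj (hball (hsub hp)) hyU (by rw [hpe]; simp [hγ])
  exact hy (this ▸ hsub hp)

/-! ### Compositions along a path -/

section Path

variable {D : ℕ} {V : Type*} (G : SGIFS D V) (w : ℕ → V)

lemma pcomp_mapsTo_O_s13 (m : ℕ) : ∀ j, (∀ i < m, G.E (w (j + i)) (w (j + i + 1))) →
    MapsTo (pcomp G.T w j m) (G.O (w (j + m))) (G.O (w j)) := by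
  induction m with
  | zero => intro j _ p hp; simpa [pcomp] using hp
  | succ m ih =>
    intro j hE p hp
    have h := ih (j + 1) (fun i hi => by
      have := hE (i + 1) (by omega)
      rwa [show j + (i + 1) = j + 1 + i by ring] at this)
    rw [show j + (m + 1) = j + 1 + m by ring] at hp
    exact G.T_sub (hE 0 (by omega)) (mem_image_of_mem _ (h hp))

lemma pcomp_injOn (m : ℕ) : ∀ j, (∀ i < m, G.E (w (j + i)) (w (j + i + 1))) →
    InjOn (pcomp G.T w j m) (G.O (w (j + m))) := by
  induction m with
  | zero => intro j _ p _ q _ h; simpa [pcomp] using h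
  | succ m ih =>
    intro j hE
    have hE' : ∀ i < m, G.E (w (j + 1 + i)) (w (j + 1 + i + 1)) := fun i hi => by
      have := hE (i + 1) (by omega)
      rwa [show j + (i + 1) = j + 1 + i by ring] at this
    rw [show j + (m + 1) = j + 1 + m by ring]
    exact (G.T_inj (hE 0 (by omega))).comp (ih (j + 1) hE') (pcomp_mapsTo_O_s13 G w m (j + 1) hE')

/-- Chain rule along a path: the derivative of the composition is invertible, contracts by
`r ^ m`, and its inverse is bounded by the product of the norms of the inverse derivatives. -/
lemma pcomp_deriv (m : ℕ) : ∀ j, (∀ i < m, G.E (w (j + i)) (w (j + i + 1))) →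
    ∀ p ∈ G.O (w (j + m)), ∃ e : Pt D ≃L[ℝ] Pt D,
      HasStrictFDerivAt (pcomp G.T w j m) (e : Pt D →L[ℝ] Pt D) p ∧
      ‖(e : Pt D →L[ℝ] Pt D)‖ ≤ G.r ^ m ∧
      ‖(e.symm : Pt D →L[ℝ] Pt D)‖ ≤ ∏ i ∈ Finset.range m,
        ‖Ring.inverse (fderiv ℝ (G.T (w (j + i)) (w (j + i + 1)))
          (pcomp G.T w (j + i + 1) (m - (i + 1)) p))‖ := by
  induction m with
  | zero =>
    intro j _ p _
    refine ⟨ContinuousLinearEquiv.refl ℝ _, hasStrictFDerivAt_id p, ?_, ?_⟩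
    · simpa using ContinuousLinearMap.norm_id_le
    · simpa using ContinuousLinearMap.norm_id_le
  | succ m ih =>
    intro j hE p hp
    have hE' : ∀ i < m, G.E (w (j + 1 + i)) (w (j + 1 + i + 1)) := fun i hi => by
      have := hE (i + 1) (by omega)
      rwa [show j + (i + 1) = j + 1 + i by ring] at this
    have hE0 : G.E (w j) (w (j + 1)) := hE 0 (by omega)
    rw [show j + (m + 1) = j + 1 + m by ring] at hp
    obtain ⟨e, he, her, hei⟩ := ih (j + 1) hE' p hp
    have hq := pcomp_mapsTo_O_s13 G w m (j + 1) hE' hp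
    set q := pcomp G.T w (j + 1) m p with hqdef
    obtain ⟨b, hb, hinv⟩ : ∃ b : Pt D ≃L[ℝ] Pt D,
        (b : Pt D →L[ℝ] Pt D) = fderiv ℝ (G.T (w j) (w (j + 1))) q ∧
        (b.symm : Pt D →L[ℝ] Pt D) = Ring.inverse (fderiv ℝ (G.T (w j) (w (j + 1))) q) := by
      obtain ⟨a, ha⟩ := G.T_unit hE0 q hq
      refine ⟨ContinuousLinearEquiv.ofUnit a, ha, ?_⟩
      rw [← ha, Ring.inverse_unit]; rfl
    have hT : HasStrictFDerivAt (G.T (w j) (w (j + 1))) (b : Pt D →L[ℝ] Pt D) q := by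
      have h1 : ContDiffAt ℝ 1 (G.T (w j) (w (j + 1))) q :=
        (G.T_diff hE0).contDiffAt ((G.O_open _).mem_nhds hq)
      rw [hb]
      exact h1.hasStrictFDerivAt (by norm_num)
    have hfn : ‖(b : Pt D →L[ℝ] Pt D)‖ ≤ G.r := by
      rw [hb]; exact G.T_contr hE0 q hq
    have hr0 : 0 ≤ G.r := (norm_nonneg _).trans hfn
    have hcomp : ((e.trans b : Pt D ≃L[ℝ] Pt D) : Pt D →L[ℝ] Pt D) =
        (b : Pt D →L[ℝ] Pt D).comp (e : Pt D →L[ℝ] Pt D) := rfl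
    have hcomp' : ((e.trans b).symm : Pt D →L[ℝ] Pt D) =
        (e.symm : Pt D →L[ℝ] Pt D).comp (b.symm : Pt D →L[ℝ] Pt D) := rfl
    refine ⟨e.trans b, hT.comp p he, ?_, ?_⟩
    · rw [hcomp, pow_succ']
      exact (ContinuousLinearMap.opNorm_comp_le _ _).trans
        (mul_le_mul hfn her (norm_nonneg _) hr0)
    · rw [hcomp', Finset.prod_range_succ']
      refine (ContinuousLinearMap.opNorm_comp_le _ _).trans ?_
      refine mul_le_mul (hei.trans (le_of_eq ?_)) ?_ (norm_nonneg _)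
        (Finset.prod_nonneg fun _ _ => norm_nonneg _)
      · refine Finset.prod_congr rfl fun i _ => ?_
        rw [show j + (i + 1) = j + 1 + i by ring, show m + 1 - (i + 1 + 1) = m - (i + 1) by omega]
      · rw [hinv]; rfl

lemma pcomp_dist_le {ρ : ℝ} (m j : ℕ) (hE : ∀ i < m, G.E (w (j + i)) (w (j + i + 1)))
    {p q : Pt D} (hρ : ball p ρ ⊆ G.O (w (j + m))) (hq : dist q p < ρ) :
    dist (pcomp G.T w j m q) (pcomp G.T w j m p) ≤ G.r ^ m * dist q p := by
  have hρ0 : 0 < ρ := dist_nonneg.trans_lt hq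
  choose! e he her _ using pcomp_deriv G w m j hE
  rw [dist_eq_norm, dist_eq_norm]
  exact (convex_ball p ρ).norm_image_sub_le_of_norm_hasFDerivWithin_le
    (fun a ha => (he a (hρ ha)).hasFDerivAt.hasFDerivWithinAt) (fun a ha => her a (hρ ha))
    (mem_ball_self hρ0) hq

end Path

/-! ### Distortion and separation of points -/

/-- The separation estimate for pairs of points of a seed set, with a constant uniform over
all paths. -/
lemma exists_pointwise_separation {D : ℕ} {V : Type*} (G : SGIFS D V)
    (hBDI : CondBDI G.E G.O G.T) :
    ∃ c > 0, ∀ (n : ℕ) (w : ℕ → V), (∀ i < n, G.E (w i) (w (i + 1))) →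
      ∀ x ∈ G.J (w n), ∀ y ∈ G.J (w n), ∀ z ∈ G.J (w n),
        c * dist x y * (∏ j ∈ Finset.range n,
              inorm (fderiv ℝ (G.T (w j) (w (j + 1)))
                (pcomp G.T w (j + 1) (n - (j + 1)) z))) ≤
          dist (pcomp G.T w 0 n x) (pcomp G.T w 0 n y) := by
  obtain ⟨c₀, hc₀, β, ⟨hβ0, hβ1⟩, hB⟩ := hBDI
  obtain ⟨ρ, hρ, hJO⟩ := G.hJO
  obtain ⟨δ₀, hδ₀⟩ := G.J_diam
  have hballO : ∀ v, ∀ x ∈ G.J v, ball x ρ ⊆ G.O v := by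
    intro v x hx y hy
    by_contra h
    have := hJO v x hx y h
    rw [mem_ball, dist_comm] at hy
    linarith
  set δ := max δ₀ ρ with hδ
  have hδpos : 0 < δ := hρ.trans_le (le_max_right _ _)
  have hJdist : ∀ v, ∀ x ∈ G.J v, ∀ y ∈ G.J v, dist x y ≤ δ := fun v x hx y hy =>
    (dist_le_diam_of_mem (G.J_cpt v).isBounded hx hy).trans ((hδ₀ v).trans (le_max_left _ _))
  -- One finite cover of the ball of radius `δ` serves all seed sets, after translation.
  obtain ⟨t, -, htfin, htcov⟩ :=
    (isCompact_closedBall (0 : Pt D) δ).finite_cover_balls (half_pos hρ)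
  have hcov : ∀ v, ∀ x ∈ G.J v, G.J v ⊆ ⋃ i ∈ htfin.toFinset, ball (x + i) (ρ / 2) := by
    intro v x hx y hy
    have h1 : y - x ∈ closedBall (0 : Pt D) δ := by
      rw [mem_closedBall_zero_iff, ← dist_eq_norm]; exact hJdist v y hy x hx
    obtain ⟨i, hi, hyi⟩ := mem_iUnion₂.1 (htcov h1)
    refine mem_iUnion₂.2 ⟨i, htfin.mem_toFinset.2 hi, ?_⟩
    rw [mem_ball, dist_eq_norm] at hyi ⊢
    rwa [← sub_sub]
  set N : ℝ := (htfin.toFinset.card : ℝ) with hN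
  have hN0 : 0 ≤ N := Nat.cast_nonneg _
  set L : ℝ := (N + 1) * ρ with hL
  have hL0 : 0 ≤ L := by positivity
  set a : ℝ := |G.r| ^ β with ha
  -- The total distortion is bounded by the geometric series `c₀ * L ^ β * ∑ (r ^ β) ^ m`.
  set S : ℝ := ∑' m : ℕ, c₀ * L ^ β * a ^ m with hS
  set C : ℝ := Real.exp S with hC
  have hC0 : 0 < C := Real.exp_pos _
  refine ⟨ρ / δ / C, by positivity, ?_⟩
  intro n w hE x hx y hy z hz
  rcases eq_or_ne x y with rfl | hxy
  · simp
  have : Nontrivial (Pt D) := ⟨⟨x, y, hxy⟩⟩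
  -- A path of length zero says nothing about the sign of `r`, but then no contraction is needed.
  rcases Nat.eq_zero_or_pos n with rfl | hn
  · have h1 : ρ / δ / C ≤ 1 := by
      have hS0 : 0 ≤ S := tsum_nonneg fun m => by positivity
      have : 1 ≤ C := Real.one_le_exp hS0
      have h2 : ρ / δ ≤ 1 := (div_le_one hδpos).2 (le_max_right _ _)
      exact (div_le_one hC0).2 (h2.trans this)
    simpa [pcomp] using mul_le_of_le_one_left (dist_nonneg (x := x) (y := y)) h1
  have hOJ : ∀ v, G.J v ⊆ G.O v := fun v p hp => hballO v p hp (mem_ball_self hρ)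
  have hr0 : 0 ≤ G.r := by
    obtain ⟨q, hq⟩ := (G.O_conn (w 1)).nonempty
    exact (norm_nonneg _).trans (G.T_contr (hE 0 hn) q hq)
  have ha0 : 0 ≤ a := by positivity
  have ha1 : a < 1 := by
    rw [ha, abs_of_nonneg hr0]; exact Real.rpow_lt_one hr0 G.hr hβ0
  have hsum : Summable fun m : ℕ => c₀ * L ^ β * a ^ m :=
    (summable_geometric_of_lt_one ha0 ha1).mul_left _
  have hEj : ∀ j m, j + m = n → ∀ i < m, G.E (w (j + i)) (w (j + i + 1)) :=
    fun j m hjm i hi => hE _ (by omega)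
  have hdist : ∀ j m, j + m = n → ∀ p ∈ ball x ρ,
      dist (pcomp G.T w j m p) (pcomp G.T w j m z) ≤ L * G.r ^ m := by
    intro j m hjm p hp
    have hbx : ∀ q ∈ G.J (w n), ball q ρ ⊆ G.O (w (j + m)) := by
      rw [hjm]; exact hballO (w n)
    have h1 := pcomp_dist_le G w m j (hEj j m hjm) (hbx x hx) hp
    have hcont : ContinuousOn (pcomp G.T w j m) (G.J (w n)) := fun q hq => by
      obtain ⟨e, he, -⟩ := pcomp_deriv G w m j (hEj j m hjm) q (hbx q hq (mem_ball_self hρ))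
      exact he.continuousAt.continuousWithinAt
    have hrm : 0 ≤ G.r ^ m := pow_nonneg hr0 m
    have h2 := dist_le_card_mul_of_cover (G.J_conn (w n)).isPreconnected hcont
      (ρ := ρ) (ε := G.r ^ m * ρ) (by positivity)
      (fun q hq q' hq' hqq => (pcomp_dist_le G w m j (hEj j m hjm) (hbx q' hq') hqq).trans
        (mul_le_mul_of_nonneg_left hqq.le hrm)) x htfin.toFinset (hcov _ x hx) hz hx
    have h3 : G.r ^ m * dist p x ≤ G.r ^ m * ρ :=
      mul_le_mul_of_nonneg_left (le_of_lt hp) hrm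
    have h4 := dist_triangle (pcomp G.T w j m p) (pcomp G.T w j m x) (pcomp G.T w j m z)
    rw [hL]
    nlinarith
  have hinpos : ∀ v u, G.E v u → ∀ q ∈ G.O u, 0 < inorm (fderiv ℝ (G.T v u) q) := by
    intro v u hvu q hq
    obtain ⟨b, hb⟩ := G.T_unit hvu q hq
    rw [inorm, ← hb, Ring.inverse_unit]
    exact inv_pos.2 (norm_pos_iff.2 (Units.ne_zero _))
  have hmemO : ∀ j m, j + m = n → ∀ q ∈ G.O (w n), pcomp G.T w j m q ∈ G.O (w j) := by
    intro j m hjm q hq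
    exact pcomp_mapsTo_O_s13 G w m j (hEj j m hjm) (by rwa [hjm])
  set P : Pt D → ℝ := fun q => ∏ j ∈ Finset.range n,
    inorm (fderiv ℝ (G.T (w j) (w (j + 1))) (pcomp G.T w (j + 1) (n - (j + 1)) q)) with hP
  have hPpos : ∀ q ∈ G.O (w n), 0 < P q := fun q hq => Finset.prod_pos fun j hj => by
    have hj := Finset.mem_range.1 hj
    exact hinpos _ _ (hE j hj) _ (hmemO _ _ (by omega) q hq)
  have hzO : z ∈ G.O (w n) := hOJ _ hz
  have hdistort : ∀ p ∈ ball x ρ, P z ≤ C * P p := by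
    intro p hp
    have hpO : p ∈ G.O (w n) := hballO _ x hx hp
    have h1 : P z ≤ ∏ j ∈ Finset.range n, (Real.exp (c₀ * L ^ β * a ^ (n - (j + 1))) *
        inorm (fderiv ℝ (G.T (w j) (w (j + 1))) (pcomp G.T w (j + 1) (n - (j + 1)) p))) := by
      refine Finset.prod_le_prod (fun j hj => ?_) (fun j hj => ?_)
      · have hj := Finset.mem_range.1 hj
        exact (hinpos _ _ (hE j hj) _ (hmemO _ _ (by omega) z hzO)).le
      · have hj := Finset.mem_range.1 hj
        have hqp := hmemO (j + 1) (n - (j + 1)) (by omega) p hpO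
        have hqz := hmemO (j + 1) (n - (j + 1)) (by omega) z hzO
        have hb := hB (hE j hj) _ hqp _ hqz
        have hd := hdist (j + 1) (n - (j + 1)) (by omega) p hp
        have hpos := hinpos _ _ (hE j hj) _ hqp
        set m := n - (j + 1)
        set A := inorm (fderiv ℝ (G.T (w j) (w (j + 1))) (pcomp G.T w (j + 1) m p))
        set B := inorm (fderiv ℝ (G.T (w j) (w (j + 1))) (pcomp G.T w (j + 1) m z))
        have hdβ : dist (pcomp G.T w (j + 1) m p) (pcomp G.T w (j + 1) m z) ^ β
            ≤ L ^ β * a ^ m := by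
          refine (Real.rpow_le_rpow dist_nonneg hd hβ0.le).trans (le_of_eq ?_)
          rw [Real.mul_rpow hL0 (pow_nonneg hr0 m), ha, abs_of_nonneg hr0,
            ← Real.rpow_natCast, ← Real.rpow_natCast, ← Real.rpow_mul hr0, ← Real.rpow_mul hr0,
            mul_comm β]
        have h2 : B ≤ A + c₀ * A * (L ^ β * a ^ m) := by
          have h3 := (abs_le.1 hb).1
          have h4 := mul_le_mul_of_nonneg_left hdβ (mul_nonneg hc₀.le hpos.le)
          linarith
        have h5 := Real.add_one_le_exp (c₀ * L ^ β * a ^ m)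
        have h6 := mul_le_mul_of_nonneg_right h5 hpos.le
        linarith
    refine h1.trans ?_
    rw [Finset.prod_mul_distrib, ← Real.exp_sum]
    refine mul_le_mul_of_nonneg_right (Real.exp_le_exp.2 ?_) (hPpos p hpO).le
    have h7 : ∑ j ∈ Finset.range n, c₀ * L ^ β * a ^ (n - (j + 1))
        = ∑ j ∈ Finset.range n, c₀ * L ^ β * a ^ j := by
      rw [← Finset.sum_range_reflect]
      refine Finset.sum_congr rfl fun j hj => ?_
      have hj := Finset.mem_range.1 hj
      congr 2
      omega
    rw [h7]
    exact hsum.sum_le_tsum _ fun j _ => by positivity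
  have hxyp : 0 < dist x y := dist_pos.2 hxy
  set s := min (dist x y) ρ with hs
  have hs0 : 0 < s := lt_min hxyp hρ
  have hbs : ball x s ⊆ ball x ρ := ball_subset_ball (min_le_right _ _)
  have hPz := hPpos z hzO
  have key : s ≤ C / P z * dist (pcomp G.T w 0 n x) (pcomp G.T w 0 n y) := by
    refine le_mul_dist_of_notMem_ball (U := G.O (w n)) ?_ (by positivity)
      (hbs.trans (hballO _ x hx)) (hOJ _ hy) ?_ ?_
    · have := pcomp_injOn G w n 0 (hEj 0 n (by omega))
      rwa [zero_add] at this
    · rw [mem_ball, dist_comm, not_lt]; exact min_le_left _ _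
    · intro p hp
      have hpO : p ∈ G.O (w n) := hballO _ x hx (hbs hp)
      obtain ⟨e, he, -, hei⟩ := pcomp_deriv G w n 0 (hEj 0 n (by omega)) p (by rwa [zero_add])
      refine ⟨e, he, hei.trans ?_⟩
      have h8 : ∏ i ∈ Finset.range n, ‖Ring.inverse (fderiv ℝ (G.T (w (0 + i)) (w (0 + i + 1)))
          (pcomp G.T w (0 + i + 1) (n - (i + 1)) p))‖ = (P p)⁻¹ := by
        simp only [hP, inorm, zero_add, Finset.prod_inv_distrib, inv_inv]
      rw [h8, inv_eq_one_div, div_le_div_iff₀ (hPpos p hpO) hPz, one_mul]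
      exact hdistort p (hbs hp)
  have hsl : ρ / δ * dist x y ≤ s := by
    refine le_min ?_ ?_
    · exact mul_le_of_le_one_left hxyp.le ((div_le_one hδpos).2 (le_max_right _ _))
    · rw [div_mul_eq_mul_div, div_le_iff₀ hδpos]
      exact mul_le_mul_of_nonneg_left (hJdist _ x hx y hy) hρ.le
  have h9 := hsl.trans key
  rw [div_mul_eq_mul_div C, le_div_iff₀ hPz] at h9
  calc ρ / δ / C * dist x y * P z = (ρ / δ * dist x y * P z) / C := by ring
    _ ≤ dist (pcomp G.T w 0 n x) (pcomp G.T w 0 n y) := by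
      rw [div_le_iff₀ hC0, mul_comm _ C]; exact h9

/-- Separation of images of invariant families along paths, for a strongly
connected simple GIFS satisfying `(G.6)_S` and `(G.7)_{BI}`. -/
theorem separation_along_paths
    {D : ℕ} {V : Type*} [Countable V] (G : SGIFS D V)
    (hSC : ∀ v u : V, Chain G.E v u)
    (π : (ℕ → V) → Pt D) (hπ : IsCodingMap G.E G.J G.T π)
    (hSSC : CondSSC G.E G.J G.T (π '' TMS G.E))
    (hBDI : CondBDI G.E G.O G.T)
    (W : V → Set (Pt D)) (hWne : ∀ v, (W v).Nonempty) (hWJ : ∀ v, W v ⊆ G.J v)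
    (hTW : ∀ ⦃v u⦄, G.E v u → G.T v u '' W u ⊆ W v) :
    ∃ c > 0, ∀ k : ℕ, 1 ≤ k → ∀ w : ℕ → V,
      (∀ i, i + 1 < k → G.E (w i) (w (i + 1))) →
      ∀ u u' : V, u ≠ u' → G.E (w (k - 1)) u → G.E (w (k - 1)) u' →
      ∀ z ∈ G.J (w (k - 1)),
        c * setDist (G.T (w (k - 1)) u '' W u) (G.T (w (k - 1)) u' '' W u') *
            (∏ j ∈ Finset.range (k - 1),
              inorm (fderiv ℝ (G.T (w j) (w (j + 1)))
                (pcomp G.T w (j + 1) (k - 1 - (j + 1)) z))) ≤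
          setDist (pcomp G.T w 0 (k - 1) '' (G.T (w (k - 1)) u '' W u))
            (pcomp G.T w 0 (k - 1) '' (G.T (w (k - 1)) u' '' W u')) := by
  obtain ⟨c, hc, h⟩ := exists_pointwise_separation G hBDI
  refine ⟨c, hc, ?_⟩
  intro k hk w hE u u' _ hu hu' z hz
  have hWsub : ∀ u, G.E (w (k - 1)) u → G.T (w (k - 1)) u '' W u ⊆ G.J (w (k - 1)) :=
    fun u hu => (hTW hu).trans (hWJ _)
  refine le_csInf ?_ ?_
  · obtain ⟨a, ha⟩ := hWne u
    obtain ⟨b, hb⟩ := hWne u'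
    exact ⟨_, _, mem_image_of_mem _ (mem_image_of_mem _ ha), _,
      mem_image_of_mem _ (mem_image_of_mem _ hb), rfl⟩
  · rintro _ ⟨_, ⟨x, hx, rfl⟩, _, ⟨y, hy, rfl⟩, rfl⟩
    refine le_trans ?_ (h (k - 1) w (fun i hi => hE i (by omega)) x (hWsub u hu hx) y
      (hWsub u' hu' hy) z hz)
    refine mul_le_mul_of_nonneg_right (mul_le_mul_of_nonneg_left ?_ hc.le)
      (Finset.prod_nonneg fun _ _ => inv_nonneg.2 (norm_nonneg _))
    refine csInf_le ⟨0, ?_⟩ ⟨x, hx, y, hy, rfl⟩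
    rintro _ ⟨p, _, q, _, rfl⟩
    exact dist_nonneg
end
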